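/- Let f be C²-smooth on an open neighbourhood of S^{n-1} with ∫ f dσ_{n-1} = 0, and suppose ∫∫ ⟨x,y⟩ f(x) f(y) dσ_{n-1}(x) dσ_{n-1}(y) ≤ b₀/n³ for some b₀ ≥ 0. If for some a ∈ ℝ and b ≥ 0 one has ‖f''(θ) − a I_n‖ ≤ 1 for every θ ∈ S^{n-1} and ∫ ‖f'' − a I_n‖²_HS dσ_{n-1} ≤ b², then ∫ exp{ ((n−1)/(4(1+b₀²+4b²))) · |f| } dσ_{n-1} ≤ 2. -/

import Mathlib

open MeasureTheory Metric Filter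
open scoped RealInnerProductSpace ENNReal NNReal

noncomputable section

namespace SecondOrderConc

/-- Euclidean space ℝⁿ. -/
abbrev E (n : ℕ) : Type := EuclideanSpace ℝ (Fin n)

/-- The uniform (normalized rotation-invariant) probability measure `σ_{n-1}`
on the unit sphere `S^{n-1}`, viewed as a measure on the ambient space ℝⁿ. -/
def sphMeasure (n : ℕ) : Measure (E n) :=
  ((((volume : Measure (E n)).toSphere).map Subtype.val) Set.univ)⁻¹ •
    (((volume : Measure (E n)).toSphere).map Subtype.val)

variable {n : ℕ}

/-- Euclidean Hessian of `f` at `x`, as a continuous linear operator on ℝⁿ. -/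
def hess (f : E n → ℝ) (x : E n) : E n →L[ℝ] E n :=
  fderiv ℝ (gradient f) x

/-- Squared Hilbert–Schmidt norm of an operator on ℝⁿ. -/
def hsNormSq (A : E n →L[ℝ] E n) : ℝ :=
  ∑ i : Fin n, ‖A (EuclideanSpace.single i 1)‖ ^ 2

/-- Orthogonal projection of ℝⁿ onto `θ^⊥` (for a unit vector `θ`). -/
def projPerp (θ : E n) : E n →L[ℝ] E n :=
  ContinuousLinearMap.id ℝ (E n) - (innerSL ℝ θ).smulRight θ

/-- Spherical gradient `∇_S f(θ) = ∇f(θ) − ⟨∇f(θ),θ⟩θ`. -/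
def sgrad (f : E n → ℝ) (θ : E n) : E n :=
  gradient f θ - ⟪gradient f θ, θ⟫ • θ

/-- Spherical Hessian `f''_S(θ) = P_{θ^⊥} (f''(θ) − ⟨∇f(θ),θ⟩ I_n) P_{θ^⊥}`. -/
def sHess (f : E n → ℝ) (θ : E n) : E n →L[ℝ] E n :=
  (projPerp θ).comp
    ((hess f θ - ⟪gradient f θ, θ⟫ • ContinuousLinearMap.id ℝ (E n)).comp (projPerp θ))

/-- Spherical Laplacian `Δ_S f(θ) = Tr f''_S(θ)`. -/
def sLap (f : E n → ℝ) (θ : E n) : ℝ :=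
  LinearMap.trace ℝ (E n) (sHess f θ).toLinearMap

/-- Euclidean Laplacian `Δ f = Tr f''`. -/
def eLap (f : E n → ℝ) (x : E n) : ℝ :=
  LinearMap.trace ℝ (E n) (hess f x).toLinearMap

/-- 0-homogeneous extension to `ℝⁿ \ {0}` of (the restriction to the sphere of) `g`. -/
def ext0 (g : E n → ℝ) : E n → ℝ := fun x => g (‖x‖⁻¹ • x)

section Gaussian

open ProbabilityTheory

variable {V : Type*} [NormedAddCommGroup V] [InnerProductSpace ℝ V] [FiniteDimensional ℝ V]
  [MeasurableSpace V] [BorelSpace V]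

lemma integrable_exp_mul_norm (L : ℝ) :
    Integrable (fun x : V ↦ Real.exp (L * ‖x‖)) (stdGaussian V) := by
  obtain ⟨C, hC, hint⟩ := IsGaussian.exists_integrable_exp_sq (stdGaussian V)
  refine (hint.const_mul (Real.exp (L ^ 2 / (4 * C)))).mono' (by fun_prop) (ae_of_all _ fun x ↦ ?_)
  rw [Real.norm_of_nonneg (Real.exp_pos _).le, ← Real.exp_add]
  gcongr
  have h : L ^ 2 / (4 * C) + C * ‖x‖ ^ 2 - L * ‖x‖ = (L - 2 * C * ‖x‖) ^ 2 / (4 * C) := by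
    field_simp; ring
  have : 0 ≤ (L - 2 * C * ‖x‖) ^ 2 / (4 * C) := by positivity
  linarith

lemma integrable_of_le_exp {f : V → ℝ} (hf : AEStronglyMeasurable f (stdGaussian V)) (C L : ℝ)
    (h : ∀ x, |f x| ≤ C * Real.exp (L * ‖x‖)) : Integrable f (stdGaussian V) :=
  ((integrable_exp_mul_norm L).const_mul C).mono' hf (ae_of_all _ h)

lemma integrable_exp_mul_norm_add_norm (L : ℝ) :
    Integrable (fun p : V × V ↦ Real.exp (L * (‖p.1‖ + ‖p.2‖)))
      ((stdGaussian V).prod (stdGaussian V)) := by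
  simp only [mul_add, Real.exp_add]
  exact (integrable_exp_mul_norm L).mul_prod (integrable_exp_mul_norm L)

lemma integrable_prod_of_le_exp {f : V × V → ℝ}
    (hf : AEStronglyMeasurable f ((stdGaussian V).prod (stdGaussian V))) (C L : ℝ)
    (h : ∀ p, |f p| ≤ C * Real.exp (L * (‖p.1‖ + ‖p.2‖))) :
    Integrable f ((stdGaussian V).prod (stdGaussian V)) :=
  ((integrable_exp_mul_norm_add_norm L).const_mul C).mono' hf (ae_of_all _ h)

lemma map_smul_add_smul_stdGaussian {a b : ℝ} (hab : a ^ 2 + b ^ 2 = 1) :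
    ((stdGaussian V).prod (stdGaussian V)).map (fun p : V × V ↦ a • p.1 + b • p.2) =
      stdGaussian V := by
  obtain ⟨θ, hc, hs⟩ : ∃ θ : ℝ, Real.cos θ = a ∧ Real.sin θ = b := by
    have hz : ‖(⟨a, b⟩ : ℂ)‖ = 1 := by
      rw [Complex.norm_def, Complex.normSq_mk, ← sq, ← sq, hab, Real.sqrt_one]
    have hz0 : (⟨a, b⟩ : ℂ) ≠ 0 := by
      rw [← norm_ne_zero_iff, hz]; exact one_ne_zero
    exact ⟨Complex.arg ⟨a, b⟩, by simp [Complex.cos_arg hz0, hz], by simp [Complex.sin_arg, hz]⟩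
  have h := IsGaussian.map_rotation_eq_self (μ := stdGaussian V) (by simp) θ
  have h2 : ((((stdGaussian V).prod (stdGaussian V)).map
      (ContinuousLinearMap.rotation θ)).map Prod.fst) = stdGaussian V := by
    rw [h, Measure.map_fst_prod]; simp
  rw [Measure.map_map measurable_fst (by fun_prop)] at h2
  refine Eq.trans ?_ h2
  rw [← hc, ← hs]
  congr 1

lemma integral_smul_add_smul_stdGaussian {a b : ℝ} (hab : a ^ 2 + b ^ 2 = 1) {g : V → ℝ}
    (hg : AEStronglyMeasurable g (stdGaussian V)) :
    ∫ p : V × V, g (a • p.1 + b • p.2) ∂((stdGaussian V).prod (stdGaussian V)) =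
      ∫ x, g x ∂(stdGaussian V) := by
  rw [← map_smul_add_smul_stdGaussian hab] at hg
  conv_rhs => rw [← map_smul_add_smul_stdGaussian hab]
  rw [integral_map (by fun_prop) hg]

lemma integral_sq_dual_stdGaussian (L : V →L[ℝ] ℝ) :
    ∫ x, (L x) ^ 2 ∂(stdGaussian V) = ‖L‖ ^ 2 := by
  have h := variance_dual_stdGaussian (E := V) L
  rw [variance_of_integral_eq_zero (by fun_prop) (integral_strongDual_stdGaussian L)] at h
  exact h

end Gaussian

section GaussianDensity

open ProbabilityTheory

variable {V : Type*} [NormedAddCommGroup V] [InnerProductSpace ℝ V] [FiniteDimensional ℝ V]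
  [MeasurableSpace V] [BorelSpace V]

lemma integrable_exp_neg_sq_norm :
    Integrable (fun x : V ↦ Real.exp (-(1 / 2) * ‖x‖ ^ 2)) := by
  have h := (GaussianFourier.integrable_cexp_neg_mul_sq_norm_add (V := V) (b := (1 / 2 : ℂ))
    (by norm_num) 0 0).norm
  refine h.congr (ae_of_all _ fun x ↦ ?_)
  simp only [Complex.norm_exp]
  congr 1
  simp [← Complex.ofReal_pow]

lemma stdGaussian_eq_withDensity : stdGaussian V = (volume : Measure V).withDensity fun x ↦
    ENNReal.ofReal ((2 * Real.pi) ^ (-(Module.finrank ℝ V : ℝ) / 2) *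
      Real.exp (-(1 / 2) * ‖x‖ ^ 2)) := by
  have hint := (integrable_exp_neg_sq_norm (V := V)).const_mul
    ((2 * Real.pi) ^ (-(Module.finrank ℝ V : ℝ) / 2))
  have := isFiniteMeasure_withDensity_ofReal hint.2
  refine Measure.ext_of_charFun (funext fun t ↦ ?_)
  have hG := GaussianFourier.integral_cexp_neg_mul_sq_norm_add (V := V) (b := (1 / 2 : ℂ))
    (by norm_num) Complex.I t
  have hpi : (Real.pi / (1 / 2 : ℂ)) ^ (Module.finrank ℝ V / 2 : ℂ) =
      (((2 * Real.pi) ^ ((Module.finrank ℝ V : ℝ) / 2) : ℝ) : ℂ) := by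
    rw [Complex.ofReal_cpow (by positivity)]
    push_cast
    congr 1
    ring
  rw [hpi] at hG
  rw [charFun_stdGaussian, charFun_apply,
    integral_withDensity_eq_integral_toReal_smul (by fun_prop) (by simp)]
  have : ∀ x : V, (ENNReal.ofReal ((2 * Real.pi) ^ (-(Module.finrank ℝ V : ℝ) / 2) *
      Real.exp (-(1 / 2) * ‖x‖ ^ 2))).toReal • Complex.exp (⟪x, t⟫ * Complex.I) =
      (((2 * Real.pi) ^ (-(Module.finrank ℝ V : ℝ) / 2) : ℝ) : ℂ) *
        Complex.exp (-(1 / 2) * ‖x‖ ^ 2 + Complex.I * ⟪t, x⟫) := by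
    intro x
    rw [ENNReal.toReal_ofReal (by positivity), Complex.real_smul, Complex.exp_add,
      real_inner_comm, mul_comm Complex.I]
    push_cast
    ring
  simp_rw [this]
  rw [integral_const_mul, hG, ← mul_assoc, ← Complex.ofReal_mul, ← Real.rpow_add (by positivity)]
  rw [neg_div (2 : ℝ), neg_add_cancel, Real.rpow_zero, Complex.ofReal_one, one_mul, Complex.I_sq]
  congr 1
  ring

lemma stdGaussian_absolutelyContinuous : stdGaussian V ≪ (volume : Measure V) := by
  rw [stdGaussian_eq_withDensity]
  exact withDensity_absolutelyContinuous _ _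

end GaussianDensity

set_option linter.unusedSectionVars false

section GaussianFunctional

open ProbabilityTheory Topology

variable {V : Type*} [NormedAddCommGroup V] [InnerProductSpace ℝ V] [FiniteDimensional ℝ V]
  [MeasurableSpace V] [BorelSpace V]

/-- The weighted squared increment of `G` along `a • x ↦ a • x + b • y`. -/
def weightedIncrement (w : ℝ → ℝ) (G : V → ℝ) (a b : ℝ) (p : V × V) : ℝ :=
  w (G (a • p.1)) * ((G (a • p.1 + b • p.2) - G (a • p.1)) ^ 2 *
    Real.exp |G (a • p.1 + b • p.2) - G (a • p.1)|)

lemma abs_le_of_lipschitzWith {G : V → ℝ} {K : ℝ≥0} (hG : LipschitzWith K G) (x : V) :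
    |G x| ≤ |G 0| + K * ‖x‖ := by
  have h := hG.dist_le_mul x 0
  rw [Real.dist_eq, dist_zero_right] at h
  have : |G x| ≤ |G x - G 0| + |G 0| := by simpa using abs_add_le (G x - G 0) (G 0)
  linarith

lemma abs_increment_le {G : V → ℝ} {K : ℝ≥0} (hG : LipschitzWith K G) (x y : V) :
    |G (x + y) - G x| ≤ K * ‖y‖ := by
  have h := hG.dist_le_mul (x + y) x
  rwa [Real.dist_eq, dist_eq_norm, add_sub_cancel_left] at h

lemma lipschitzWith_comp_affine {G : V → ℝ} {K : ℝ≥0} (hG : LipschitzWith K G) (v : V) (b : ℝ) :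
    LipschitzWith (K * ‖b‖₊) (fun x ↦ G (v + b • x)) := by
  refine hG.comp (LipschitzWith.of_dist_le_mul fun x y ↦ ?_)
  rw [dist_add_left, dist_smul₀, coe_nnnorm]

lemma sq_le_two_mul_exp {t : ℝ} (ht : 0 ≤ t) : t ^ 2 ≤ 2 * Real.exp t := by
  have := Real.quadratic_le_exp_of_nonneg ht
  nlinarith

lemma weightedIncrement_nonneg {w : ℝ → ℝ} (hw0 : ∀ t, 0 ≤ w t) (G : V → ℝ) (a b : ℝ)
    (p : V × V) : 0 ≤ weightedIncrement w G a b p :=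
  mul_nonneg (hw0 _) (by positivity)

lemma weightedIncrement_le {w : ℝ → ℝ} (hw1 : ∀ t, w t ≤ Real.exp |t|) {G : V → ℝ}
    {K : ℝ≥0} (hG : LipschitzWith K G) {a b : ℝ} (ha : |a| ≤ 1) (hb : |b| ≤ 1) (p : V × V) :
    weightedIncrement w G a b p ≤
      b ^ 2 * (2 * Real.exp |G 0| * Real.exp ((2 * K + 2) * (‖p.1‖ + ‖p.2‖)) * K ^ 2) := by
  have h1 : w (G (a • p.1)) ≤ Real.exp |G 0| * Real.exp (K * ‖p.1‖) := by
    refine (hw1 _).trans ?_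
    rw [← Real.exp_add]
    gcongr
    refine (abs_le_of_lipschitzWith hG _).trans ?_
    rw [norm_smul, Real.norm_eq_abs]
    gcongr
    exact mul_le_of_le_one_left (norm_nonneg _) ha
  have h2 : |G (a • p.1 + b • p.2) - G (a • p.1)| ≤ K * (|b| * ‖p.2‖) := by
    simpa [norm_smul] using abs_increment_le hG (a • p.1) (b • p.2)
  have h3 : |G (a • p.1 + b • p.2) - G (a • p.1)| ≤ K * ‖p.2‖ := by
    refine h2.trans ?_
    gcongr
    exact mul_le_of_le_one_left (norm_nonneg _) hb
  have h4 : (G (a • p.1 + b • p.2) - G (a • p.1)) ^ 2 ≤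
      b ^ 2 * (K ^ 2 * (2 * Real.exp ‖p.2‖)) := by
    rw [← sq_abs]
    calc _ ≤ (K * (|b| * ‖p.2‖)) ^ 2 := by gcongr
      _ = b ^ 2 * (K ^ 2 * ‖p.2‖ ^ 2) := by rw [mul_pow, mul_pow, sq_abs]; ring
      _ ≤ _ := by gcongr; exact sq_le_two_mul_exp (norm_nonneg _)
  unfold weightedIncrement
  calc _ ≤ (Real.exp |G 0| * Real.exp (K * ‖p.1‖)) *
        ((b ^ 2 * (K ^ 2 * (2 * Real.exp ‖p.2‖))) * Real.exp (K * ‖p.2‖)) := by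
        gcongr
    _ = b ^ 2 * (2 * Real.exp |G 0| *
          (Real.exp (K * ‖p.1‖) * Real.exp ‖p.2‖ * Real.exp (K * ‖p.2‖)) * K ^ 2) := by ring
    _ ≤ _ := by
        rw [← Real.exp_add, ← Real.exp_add]
        gcongr
        nlinarith [norm_nonneg p.1, norm_nonneg p.2, K.2,
          mul_nonneg K.2 (norm_nonneg p.1), mul_nonneg K.2 (norm_nonneg p.2)]

lemma continuous_weightedIncrement {w : ℝ → ℝ} (hw : Continuous w) {G : V → ℝ}
    (hG : Continuous G) (a b : ℝ) : Continuous (weightedIncrement w G a b) := by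
  unfold weightedIncrement
  fun_prop

lemma integrable_weightedIncrement {w : ℝ → ℝ} (hw : Continuous w) (hw0 : ∀ t, 0 ≤ w t)
    (hw1 : ∀ t, w t ≤ Real.exp |t|) {G : V → ℝ} {K : ℝ≥0} (hG : LipschitzWith K G) {a b : ℝ}
    (ha : |a| ≤ 1) (hb : |b| ≤ 1) :
    Integrable (weightedIncrement w G a b) ((stdGaussian V).prod (stdGaussian V)) := by
  refine integrable_prod_of_le_exp
    (continuous_weightedIncrement hw hG.continuous a b).aestronglyMeasurable
    (b ^ 2 * (2 * Real.exp |G 0| * K ^ 2)) (2 * K + 2) fun p ↦ ?_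
  rw [abs_of_nonneg (weightedIncrement_nonneg hw0 G a b p)]
  refine (weightedIncrement_le hw1 hG ha hb p).trans (le_of_eq ?_)
  ring

lemma tendsto_weightedIncrement {w : ℝ → ℝ} (hw : Continuous w) {G : V → ℝ}
    (hG : Continuous G) {p : V × V} (hp : DifferentiableAt ℝ G p.1) :
    Tendsto (fun k : ℕ ↦ 2 ^ k *
        weightedIncrement w G (√(1 - (1 / 2) ^ k)) (√((1 / 2) ^ k)) p) atTop
      (𝓝 (w (G p.1) * (fderiv ℝ G p.1 p.2) ^ 2)) := by
  set a : ℕ → ℝ := fun k ↦ √(1 - (1 / 2) ^ k) with ha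
  set b : ℕ → ℝ := fun k ↦ √((1 / 2) ^ k) with hb
  set c : ℕ → ℝ := fun k ↦ √(2 ^ k) with hc
  have hcb : ∀ k, c k * b k = 1 := fun k ↦ by
    rw [hc, hb]; simp only
    rw [← Real.sqrt_mul (by positivity), ← mul_pow]; norm_num
  have hpow : Tendsto (fun k : ℕ ↦ ((1 / 2 : ℝ)) ^ k) atTop (𝓝 0) :=
    tendsto_pow_atTop_nhds_zero_of_lt_one (by norm_num) (by norm_num)
  have hb0 : Tendsto b atTop (𝓝 0) := by
    have := (Real.continuous_sqrt.tendsto _).comp hpow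
    rwa [Real.sqrt_zero] at this
  have ha1 : Tendsto a atTop (𝓝 1) := by
    have := (Real.continuous_sqrt.tendsto _).comp (hpow.const_sub 1)
    rwa [sub_zero, Real.sqrt_one] at this
  have hctop : Tendsto (fun k ↦ ‖c k‖) atTop atTop := by
    have : Tendsto (fun k : ℕ ↦ √((2 : ℝ) ^ k)) atTop atTop :=
      Real.tendsto_sqrt_atTop.comp (tendsto_pow_atTop_atTop_of_one_lt (by norm_num))
    simpa [hc, abs_of_nonneg (Real.sqrt_nonneg _)] using this
  have hca : Tendsto (fun k ↦ c k * (a k - 1)) atTop (𝓝 0) := by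
    refine squeeze_zero_norm (fun k ↦ ?_) hb0
    have hq : (0 : ℝ) ≤ (1 / 2) ^ k := by positivity
    have hq1 : ((1 / 2 : ℝ)) ^ k ≤ 1 := pow_le_one₀ (by norm_num) (by norm_num)
    have h1 : a k ≤ 1 := Real.sqrt_le_one.2 (by linarith)
    have h2 : 1 - (1 / 2 : ℝ) ^ k ≤ a k := Real.le_sqrt_of_sq_le (by nlinarith)
    have hbb : b k * b k = (1 / 2) ^ k := Real.mul_self_sqrt hq
    have hc0 : 0 ≤ c k := Real.sqrt_nonneg _
    rw [norm_mul, Real.norm_of_nonneg hc0, Real.norm_of_nonpos (by linarith)]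
    calc c k * -(a k - 1) ≤ c k * (b k * b k) := by gcongr; linarith
      _ = b k := by rw [← mul_assoc, hcb, one_mul]
  have key : ∀ (v : V) (d : ℕ → V), Tendsto d atTop (𝓝 0) →
      Tendsto (fun k ↦ c k • d k) atTop (𝓝 v) →
      Tendsto (fun k ↦ c k * (G (p.1 + d k) - G p.1)) atTop (𝓝 (fderiv ℝ G p.1 v)) :=
    fun v d hd hcd ↦ (hasFDerivWithinAt_univ.2 hp.hasFDerivAt).lim hd (by simp) hcd
  have hd1 : Tendsto (fun k ↦ (a k - 1) • p.1) atTop (𝓝 0) := by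
    simpa using (ha1.sub_const 1).smul_const p.1
  have hd2 : Tendsto (fun k ↦ b k • p.2) atTop (𝓝 0) := by
    simpa using hb0.smul_const p.2
  have hcd1 : Tendsto (fun k ↦ c k • (a k - 1) • p.1) atTop (𝓝 0) := by
    simpa [smul_smul] using hca.smul_const p.1
  have k1 := key 0 _ hd1 hcd1
  have k2 := key p.2 (fun k ↦ (a k - 1) • p.1 + b k • p.2) (by simpa using hd1.add hd2) (by
    simpa [smul_add, smul_smul, hcb] using hcd1.add_const p.2)
  have hbase : ∀ k, p.1 + (a k - 1) • p.1 = a k • p.1 := fun k ↦ by module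
  have hinc : Tendsto (fun k ↦ c k * (G (a k • p.1 + b k • p.2) - G (a k • p.1))) atTop
      (𝓝 (fderiv ℝ G p.1 p.2)) := by
    have := k2.sub k1
    simp only [← add_assoc, hbase, map_zero, sub_zero] at this
    refine this.congr fun k ↦ by ring
  have hGa : Tendsto (fun k ↦ G (a k • p.1)) atTop (𝓝 (G p.1)) := by
    have := (hG.tendsto _).comp (ha1.smul_const p.1)
    rwa [one_smul] at this
  have hGab : Tendsto (fun k ↦ G (a k • p.1 + b k • p.2) - G (a k • p.1)) atTop (𝓝 0) := by
    have := (hG.tendsto _).comp ((ha1.smul_const p.1).add hd2)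
    rw [one_smul, add_zero] at this
    simpa using this.sub hGa
  have hlim := ((hw.tendsto _).comp hGa).mul ((hinc.pow 2).mul
    ((Real.continuous_exp.comp continuous_abs).tendsto _ |>.comp hGab))
  simp only [Function.comp_def, abs_zero, Real.exp_zero, mul_one] at hlim
  refine hlim.congr fun k ↦ ?_
  have hc2 : c k ^ 2 = 2 ^ k := Real.sq_sqrt (by positivity)
  rw [weightedIncrement, mul_pow, hc2]
  ring

/-- If a functional of Lipschitz functions is subadditive under splitting the Gaussian variable
into two equal independent parts, then its local quadratic behaviour controls it globally. -/
theorem le_integral_fderiv_sq_of_doubling {H : (V → ℝ) → ℝ} {w : ℝ → ℝ} {κ : ℝ}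
    (hw : Continuous w) (hw0 : ∀ t, 0 ≤ w t) (hw1 : ∀ t, w t ≤ Real.exp |t|)
    (hdoubling : ∀ G (K : ℝ≥0), LipschitzWith K G →
      H G ≤ 2 * ∫ y, H (fun x ↦ G (√(1 / 2) • y + √(1 / 2) • x)) ∂(stdGaussian V))
    (hmeas : ∀ G (K : ℝ≥0), LipschitzWith K G → ∀ a b : ℝ,
      AEStronglyMeasurable (fun y ↦ H (fun x ↦ G (a • y + b • x))) (stdGaussian V))
    (hnonneg : ∀ G (K : ℝ≥0), LipschitzWith K G → 0 ≤ H G)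
    (hlocal : ∀ G (K : ℝ≥0), LipschitzWith K G → ∀ c,
      H G ≤ κ * ∫ x, w c * ((G x - c) ^ 2 * Real.exp |G x - c|) ∂(stdGaussian V))
    {G : V → ℝ} {K : ℝ≥0} (hG : LipschitzWith K G) :
    H G ≤ κ * ∫ y, w (G y) * ‖fderiv ℝ G y‖ ^ 2 ∂(stdGaussian V) := by
  have hint : ∀ {a b : ℝ}, |a| ≤ 1 → |b| ≤ 1 →
      Integrable (fun y ↦ H (fun x ↦ G (a • y + b • x))) (stdGaussian V) := by
    intro a b ha hb
    refine ((integrable_weightedIncrement hw hw0 hw1 hG ha hb).integral_prod_left.const_mul κ).mono'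
      (hmeas G K hG a b) (ae_of_all _ fun y ↦ ?_)
    have hl := lipschitzWith_comp_affine hG (a • y) b
    rw [Real.norm_of_nonneg (hnonneg _ _ hl)]
    exact hlocal _ _ hl (G (a • y))
  have hhalf : (√(1 / 2) : ℝ) ^ 2 = 1 / 2 := Real.sq_sqrt (by norm_num)
  have hq0 : ∀ k : ℕ, (0 : ℝ) ≤ (1 / 2) ^ k := fun k ↦ by positivity
  have hq1 : ∀ k : ℕ, ((1 / 2 : ℝ)) ^ k ≤ 1 := fun k ↦ pow_le_one₀ (by norm_num) (by norm_num)
  have habs : ∀ t : ℝ, t ≤ 1 → |√t| ≤ 1 := fun t ht ↦ by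
    rwa [abs_of_nonneg (Real.sqrt_nonneg _), Real.sqrt_le_one]
  have ha : ∀ k : ℕ, |√(1 - (1 / 2 : ℝ) ^ k)| ≤ 1 := fun k ↦ habs _ (by linarith [hq0 k])
  have hb : ∀ k : ℕ, |√((1 / 2 : ℝ) ^ k)| ≤ 1 := fun k ↦ habs _ (hq1 k)
  have hsplit : ∀ k : ℕ, H G ≤ 2 ^ k *
      ∫ y, H (fun x ↦ G (√(1 - (1 / 2) ^ k) • y + √((1 / 2) ^ k) • x)) ∂(stdGaussian V) := by
    intro k
    induction k with
    | zero => simp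
    | succ k ih =>
      set a := √(1 - (1 / 2 : ℝ) ^ k) with hadef
      set b := √((1 / 2 : ℝ) ^ k) with hbdef
      set a' := √(1 - (1 / 2 : ℝ) ^ (k + 1)) with hadef'
      set b' := √((1 / 2 : ℝ) ^ (k + 1)) with hbdef'
      have hb' : b * √(1 / 2) = b' := by
        rw [hbdef, hbdef', pow_succ, Real.sqrt_mul (hq0 k)]
      have ha2 : a ^ 2 = 1 - (1 / 2) ^ k := Real.sq_sqrt (by linarith [hq1 k])
      have hb2 : b' ^ 2 = (1 / 2) ^ (k + 1) := Real.sq_sqrt (hq0 _)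
      have ha2' : a' ^ 2 = 1 - (1 / 2) ^ (k + 1) := Real.sq_sqrt (by linarith [hq1 (k + 1)])
      have ha0 : a' ≠ 0 := by
        intro h0
        rw [h0, zero_pow two_ne_zero, pow_succ] at ha2'
        linarith [hq1 k]
      have hab : (a / a') ^ 2 + (b' / a') ^ 2 = 1 := by
        rw [div_pow, div_pow, ← add_div, ha2, hb2, ha2', div_eq_one_iff_eq]
        · rw [pow_succ]; ring
        · rw [← ha2']; positivity
      set Ψ : V → ℝ := fun v ↦ H (fun x ↦ G (a' • v + b' • x)) with hΨ
      have hΨint : Integrable Ψ (stdGaussian V) := hint (ha _) (hb _)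
      have hΨprod : Integrable (fun p : V × V ↦ Ψ ((a / a') • p.1 + (b' / a') • p.2))
          ((stdGaussian V).prod (stdGaussian V)) := by
        rw [← map_smul_add_smul_stdGaussian hab] at hΨint
        exact hΨint.comp_measurable (by fun_prop)
      have hrw : ∀ y z : V, H (fun x ↦ G (a • y + b • (√(1 / 2) • z + √(1 / 2) • x))) =
          Ψ ((a / a') • y + (b' / a') • z) := by
        intro y z
        simp only [hΨ, smul_add, smul_smul, hb', mul_div_cancel₀ _ ha0, add_assoc]
      have hstep : ∀ y, H (fun x ↦ G (a • y + b • x)) ≤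
          2 * ∫ z, Ψ ((a / a') • y + (b' / a') • z) ∂(stdGaussian V) := by
        intro y
        have := hdoubling _ _ (lipschitzWith_comp_affine hG (a • y) b)
        simpa only [hrw] using this
      calc H G ≤ 2 ^ k * ∫ y, H (fun x ↦ G (a • y + b • x)) ∂(stdGaussian V) := ih
        _ ≤ 2 ^ k * ∫ y, 2 * ∫ z, Ψ ((a / a') • y + (b' / a') • z)
              ∂(stdGaussian V) ∂(stdGaussian V) := by
            refine mul_le_mul_of_nonneg_left (integral_mono (hint (ha k) (hb k))
              (hΨprod.integral_prod_left.const_mul 2) hstep) (by positivity)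
        _ = 2 ^ (k + 1) * ∫ y, Ψ y ∂(stdGaussian V) := by
            rw [integral_const_mul, ← integral_prod _ hΨprod,
              integral_smul_add_smul_stdGaussian hab hΨint.aestronglyMeasurable]
            ring
  have hbound : ∀ k : ℕ, H G ≤ κ * ∫ p, 2 ^ k *
      weightedIncrement w G (√(1 - (1 / 2) ^ k)) (√((1 / 2) ^ k)) p
        ∂((stdGaussian V).prod (stdGaussian V)) := by
    intro k
    have hi := integrable_weightedIncrement hw hw0 hw1 hG (ha k) (hb k)
    refine (hsplit k).trans ?_
    rw [integral_const_mul, mul_left_comm, integral_prod _ hi, ← integral_const_mul κ]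
    refine mul_le_mul_of_nonneg_left (integral_mono (hint (ha k) (hb k))
      (hi.integral_prod_left.const_mul κ) fun y ↦ ?_) (by positivity)
    exact hlocal _ _ (lipschitzWith_comp_affine hG _ _) (G (√(1 - (1 / 2) ^ k) • y))
  have hdiff : ∀ᵐ p ∂((stdGaussian V).prod (stdGaussian V)), DifferentiableAt ℝ G p.1 :=
    Measure.quasiMeasurePreserving_fst.ae
      (stdGaussian_absolutelyContinuous.ae_le (hG.ae_differentiableAt (μ := volume)))
  have hlim : Tendsto (fun k : ℕ ↦ ∫ p, 2 ^ k *
      weightedIncrement w G (√(1 - (1 / 2) ^ k)) (√((1 / 2) ^ k)) p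
        ∂((stdGaussian V).prod (stdGaussian V))) atTop
      (𝓝 (∫ p, w (G p.1) * (fderiv ℝ G p.1 p.2) ^ 2
        ∂((stdGaussian V).prod (stdGaussian V)))) := by
    refine tendsto_integral_of_dominated_convergence
      (fun p ↦ 2 * Real.exp |G 0| * K ^ 2 * Real.exp ((2 * K + 2) * (‖p.1‖ + ‖p.2‖)))
      (fun k ↦ ((integrable_weightedIncrement hw hw0 hw1 hG (ha k) (hb k)).const_mul
        _).aestronglyMeasurable)
      ((integrable_exp_mul_norm_add_norm _).const_mul _) (fun k ↦ ae_of_all _ fun p ↦ ?_)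
      (hdiff.mono fun p hp ↦ tendsto_weightedIncrement hw hG.continuous hp)
    rw [Real.norm_of_nonneg (mul_nonneg (by positivity) (weightedIncrement_nonneg hw0 _ _ _ _))]
    refine (mul_le_mul_of_nonneg_left (weightedIncrement_le hw1 hG (ha k) (hb k) p)
      (by positivity)).trans (le_of_eq ?_)
    rw [Real.sq_sqrt (hq0 k), ← mul_assoc, ← mul_pow, mul_one_div_cancel two_ne_zero, one_pow]
    ring
  have hint_lim : Integrable (fun p : V × V ↦ w (G p.1) * (fderiv ℝ G p.1 p.2) ^ 2)
      ((stdGaussian V).prod (stdGaussian V)) := by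
    refine integrable_prod_of_le_exp (Measurable.aestronglyMeasurable ?_)
      (2 * Real.exp |G 0| * K ^ 2) (2 * K + 2) fun p ↦ ?_
    · have h1 : Measurable fun p : V × V ↦ fderiv ℝ G p.1 p.2 :=
        (ContinuousLinearMap.measurable_apply₂ ).comp
          (((measurable_fderiv ℝ G).comp measurable_fst).prodMk measurable_snd)
      exact (hw.measurable.comp (hG.continuous.measurable.comp measurable_fst)).mul (h1.pow_const 2)
    · rw [abs_of_nonneg (mul_nonneg (hw0 _) (sq_nonneg _))]
      have h1 : |fderiv ℝ G p.1 p.2| ≤ K * ‖p.2‖ :=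
        ((fderiv ℝ G p.1).le_opNorm p.2).trans
          (mul_le_mul_of_nonneg_right (norm_fderiv_le_of_lipschitz ℝ hG) (norm_nonneg _))
      calc w (G p.1) * (fderiv ℝ G p.1 p.2) ^ 2
          ≤ Real.exp (|G 0| + K * ‖p.1‖) * (K ^ 2 * (2 * Real.exp ‖p.2‖)) := by
            rw [← sq_abs (fderiv ℝ G p.1 p.2)]
            refine mul_le_mul ((hw1 _).trans (Real.exp_le_exp.2 (abs_le_of_lipschitzWith hG _)))
              ?_ (by positivity) (by positivity)
            calc |fderiv ℝ G p.1 p.2| ^ 2 ≤ (K * ‖p.2‖) ^ 2 := by gcongr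
              _ = K ^ 2 * ‖p.2‖ ^ 2 := mul_pow _ _ _
              _ ≤ _ := by gcongr; exact sq_le_two_mul_exp (norm_nonneg _)
        _ = 2 * Real.exp |G 0| * K ^ 2 * (Real.exp (K * ‖p.1‖) * Real.exp ‖p.2‖) := by
            rw [Real.exp_add]; ring
        _ ≤ _ := by
            rw [← Real.exp_add]
            gcongr
            nlinarith [norm_nonneg p.1, norm_nonneg p.2, K.2,
              mul_nonneg K.2 (norm_nonneg p.1), mul_nonneg K.2 (norm_nonneg p.2)]
  have hfub : ∫ p, w (G p.1) * (fderiv ℝ G p.1 p.2) ^ 2 ∂((stdGaussian V).prod (stdGaussian V)) =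
      ∫ y, w (G y) * ‖fderiv ℝ G y‖ ^ 2 ∂(stdGaussian V) := by
    rw [integral_prod _ hint_lim]
    simp only [integral_const_mul, integral_sq_dual_stdGaussian]
  rw [hfub] at hlim
  exact ge_of_tendsto (hlim.const_mul κ) (Eventually.of_forall hbound)

end GaussianFunctional

section HasIntegral

variable {Ω : Type*} [MeasurableSpace Ω] {μ : Measure Ω} {f g : Ω → ℝ} {u v : ℝ}

/-- `f` is integrable with integral `v`. -/
def HasInt (μ : Measure Ω) (f : Ω → ℝ) (v : ℝ) : Prop :=
  Integrable f μ ∧ ∫ x, f x ∂μ = v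

lemma _root_.MeasureTheory.Integrable.hasInt (hf : Integrable f μ) : HasInt μ f (∫ x, f x ∂μ) :=
  ⟨hf, rfl⟩

lemma HasInt.add (hf : HasInt μ f u) (hg : HasInt μ g v) :
    HasInt μ (fun x ↦ f x + g x) (u + v) :=
  ⟨hf.1.add hg.1, by rw [integral_add hf.1 hg.1, hf.2, hg.2]⟩

lemma HasInt.sub (hf : HasInt μ f u) (hg : HasInt μ g v) :
    HasInt μ (fun x ↦ f x - g x) (u - v) :=
  ⟨hf.1.sub hg.1, by rw [integral_sub hf.1 hg.1, hf.2, hg.2]⟩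

lemma HasInt.const_mul (hf : HasInt μ f u) (c : ℝ) : HasInt μ (fun x ↦ c * f x) (c * u) :=
  ⟨hf.1.const_mul c, by rw [integral_const_mul, hf.2]⟩

lemma hasInt_const [IsProbabilityMeasure μ] (c : ℝ) : HasInt μ (fun _ ↦ c) c :=
  ⟨integrable_const c, by simp⟩

lemma HasInt.mono (hf : HasInt μ f u) (hg : HasInt μ g v) (h : ∀ x, f x ≤ g x) : u ≤ v := by
  rw [← hf.2, ← hg.2]
  exact integral_mono hf.1 hg.1 h

lemma HasInt.mono_ae (hf : HasInt μ f u) (hg : HasInt μ g v) (h : ∀ᵐ x ∂μ, f x ≤ g x) :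
    u ≤ v := by
  rw [← hf.2, ← hg.2]
  exact integral_mono_ae hf.1 hg.1 h

lemma HasInt.comp_fst {Ω' : Type*} [MeasurableSpace Ω'] (ν : Measure Ω') [IsProbabilityMeasure ν]
    [SFinite μ] (hf : HasInt μ f u) : HasInt (μ.prod ν) (fun p ↦ f p.1) u :=
  ⟨hf.1.comp_fst ν, by rw [integral_fun_fst, probReal_univ, one_smul, hf.2]⟩

lemma HasInt.comp_snd {Ω' : Type*} [MeasurableSpace Ω'] (ν : Measure Ω') [IsProbabilityMeasure ν]
    [SFinite μ] (hf : HasInt μ f u) : HasInt (ν.prod μ) (fun p ↦ f p.2) u :=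
  ⟨hf.1.comp_snd ν, by rw [integral_fun_snd, probReal_univ, one_smul, hf.2]⟩

end HasIntegral

section ExpGrowth

open ProbabilityTheory

/-- `f` grows at most exponentially in the norm. -/
def HasExpGrowth {W : Type*} [NormedAddCommGroup W] (f : W → ℝ) : Prop :=
  ∃ C L : ℝ, 0 ≤ C ∧ 0 ≤ L ∧ ∀ x, |f x| ≤ C * Real.exp (L * ‖x‖)

variable {W : Type*} [NormedAddCommGroup W] {f g : W → ℝ}

lemma HasExpGrowth.add (hf : HasExpGrowth f) (hg : HasExpGrowth g) :
    HasExpGrowth fun x ↦ f x + g x := by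
  obtain ⟨C, L, hC, hL, h⟩ := hf
  obtain ⟨C', L', hC', hL', h'⟩ := hg
  refine ⟨C + C', L + L', by positivity, by positivity, fun x ↦ (abs_add_le _ _).trans ?_⟩
  have h1 : Real.exp (L * ‖x‖) ≤ Real.exp ((L + L') * ‖x‖) := by gcongr; linarith
  have h2 : Real.exp (L' * ‖x‖) ≤ Real.exp ((L + L') * ‖x‖) := by gcongr; linarith
  nlinarith [h x, h' x, mul_le_mul_of_nonneg_left h1 hC, mul_le_mul_of_nonneg_left h2 hC']

lemma HasExpGrowth.mul (hf : HasExpGrowth f) (hg : HasExpGrowth g) :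
    HasExpGrowth fun x ↦ f x * g x := by
  obtain ⟨C, L, hC, hL, h⟩ := hf
  obtain ⟨C', L', hC', hL', h'⟩ := hg
  refine ⟨C * C', L + L', by positivity, by positivity, fun x ↦ ?_⟩
  rw [abs_mul, add_mul, Real.exp_add, mul_mul_mul_comm]
  exact mul_le_mul (h x) (h' x) (abs_nonneg _) (by positivity)

lemma hasExpGrowth_const (c : ℝ) : HasExpGrowth fun _ : W ↦ c :=
  ⟨|c|, 0, abs_nonneg c, le_rfl, fun x ↦ by simp⟩

lemma HasExpGrowth.sub (hf : HasExpGrowth f) (hg : HasExpGrowth g) :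
    HasExpGrowth fun x ↦ f x - g x := by
  simpa [sub_eq_add_neg] using hf.add ((hasExpGrowth_const (-1)).mul hg)

lemma HasExpGrowth.pow_two (hf : HasExpGrowth f) : HasExpGrowth fun x ↦ f x ^ 2 := by
  simpa only [sq] using hf.mul hf

lemma HasExpGrowth.comp_of_norm_le {W' : Type*} [NormedAddCommGroup W'] (hf : HasExpGrowth f)
    {φ : W' → W} {c : ℝ} (hφ : ∀ x, ‖φ x‖ ≤ c * ‖x‖) : HasExpGrowth fun x ↦ f (φ x) := by
  obtain ⟨C, L, hC, hL, h⟩ := hf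
  refine ⟨C, L * |c|, hC, by positivity, fun x ↦ (h _).trans ?_⟩
  rw [mul_assoc]
  gcongr
  exact (hφ x).trans (mul_le_mul_of_nonneg_right (le_abs_self c) (norm_nonneg x))

lemma HasExpGrowth.comp_fst {W' : Type*} [NormedAddCommGroup W'] (hf : HasExpGrowth f) :
    HasExpGrowth fun p : W × W' ↦ f p.1 :=
  hf.comp_of_norm_le (c := 1) fun p ↦ by simpa using norm_fst_le p

lemma HasExpGrowth.comp_snd {W' : Type*} [NormedAddCommGroup W'] (hf : HasExpGrowth f) :
    HasExpGrowth fun p : W' × W ↦ f p.2 :=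
  hf.comp_of_norm_le (c := 1) fun p ↦ by simpa using norm_snd_le p

variable {V : Type*} [NormedAddCommGroup V] [InnerProductSpace ℝ V] [FiniteDimensional ℝ V]
  [MeasurableSpace V] [BorelSpace V]

lemma _root_.LipschitzWith.hasExpGrowth {G : V → ℝ} {K : ℝ≥0} (hG : LipschitzWith K G) :
    HasExpGrowth G := by
  refine ⟨|G 0| + 1, K, by positivity, K.2, fun x ↦ (abs_le_of_lipschitzWith hG x).trans ?_⟩
  have h1 := Real.add_one_le_exp (K * ‖x‖)
  have h2 : 0 ≤ K * ‖x‖ := by positivity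
  nlinarith [abs_nonneg (G 0)]

lemma _root_.LipschitzWith.hasExpGrowth_exp {G : V → ℝ} {K : ℝ≥0} (hG : LipschitzWith K G) :
    HasExpGrowth fun x ↦ Real.exp (G x) := by
  refine ⟨Real.exp |G 0|, K, by positivity, K.2, fun x ↦ ?_⟩
  rw [abs_of_pos (Real.exp_pos _), ← Real.exp_add]
  exact Real.exp_le_exp.2 ((le_abs_self _).trans (abs_le_of_lipschitzWith hG x))

lemma HasExpGrowth.integrable {f : V → ℝ} (hf : HasExpGrowth f)
    (hm : AEStronglyMeasurable f (stdGaussian V)) : Integrable f (stdGaussian V) := by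
  obtain ⟨C, L, hC, hL, h⟩ := hf
  exact integrable_of_le_exp hm C L h

lemma HasExpGrowth.integrable_prod {f : V × V → ℝ} (hf : HasExpGrowth f)
    (hm : AEStronglyMeasurable f ((stdGaussian V).prod (stdGaussian V))) :
    Integrable f ((stdGaussian V).prod (stdGaussian V)) := by
  obtain ⟨C, L, hC, hL, h⟩ := hf
  refine integrable_prod_of_le_exp hm C L fun p ↦ (h p).trans ?_
  gcongr
  exact max_le (by linarith [norm_nonneg p.2]) (by linarith [norm_nonneg p.1])

lemma hasExpGrowth_comp_affine {f : V → ℝ} (hf : HasExpGrowth f) (a b : ℝ) :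
    HasExpGrowth fun p : V × V ↦ f (a • p.1 + b • p.2) :=
  hf.comp_of_norm_le (c := |a| + |b|) fun p ↦ (norm_add_le _ _).trans (by
    rw [norm_smul, norm_smul, add_mul, Real.norm_eq_abs, Real.norm_eq_abs]
    gcongr
    · exact norm_fst_le p
    · exact norm_snd_le p)

end ExpGrowth

section GaussianInequalities

open ProbabilityTheory

lemma mul_exp_sub_exp_add_one_le (δ : ℝ) :
    Real.exp δ * δ - Real.exp δ + 1 ≤ 1 / 2 * (δ ^ 2 * Real.exp |δ|) := by
  rcases le_total 0 δ with h | h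
  · rw [abs_of_nonneg h]
    have h1 := Real.quadratic_le_exp_of_nonneg h
    have h2 : 1 ≤ Real.exp δ * (1 - δ + δ ^ 2 / 2) := by
      calc (1 : ℝ) ≤ (1 + δ + δ ^ 2 / 2) * (1 - δ + δ ^ 2 / 2) := by nlinarith [sq_nonneg (δ ^ 2)]
        _ ≤ _ := mul_le_mul_of_nonneg_right h1 (by nlinarith [sq_nonneg (δ - 1)])
    linarith
  · have hmono : AntitoneOn (fun t : ℝ ↦ Real.exp t * (1 - t) + t ^ 2 / 2) (Set.Iic 0) := by
      refine antitoneOn_of_deriv_nonpos (convex_Iic 0) (by fun_prop) (by fun_prop) fun t ht ↦ ?_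
      rw [interior_Iic, Set.mem_Iio] at ht
      have hd : HasDerivAt (fun t : ℝ ↦ Real.exp t * (1 - t) + t ^ 2 / 2)
          (Real.exp t * (1 - t) + Real.exp t * (-1) + (2 * t ^ 1 * 1) / 2) t :=
        ((Real.hasDerivAt_exp t).mul ((hasDerivAt_id t).const_sub 1)).add
          (((hasDerivAt_id t).pow 2).div_const 2)
      rw [hd.deriv]
      have : Real.exp t ≤ 1 := Real.exp_le_one_iff.2 ht.le
      nlinarith
    have h1 := hmono h (Set.mem_Iic.2 le_rfl) h
    simp only [Real.exp_zero, sub_zero, mul_one] at h1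
    have h2 : (1 : ℝ) ≤ Real.exp |δ| := Real.one_le_exp (abs_nonneg δ)
    nlinarith [sq_nonneg δ]

lemma sub_le_mul_log_sub_log {s t : ℝ} (hs : 0 < s) (ht : 0 < t) :
    t - s ≤ t * (Real.log t - Real.log s) := by
  have h := Real.log_le_sub_one_of_pos (div_pos hs ht)
  rw [Real.log_div hs.ne' ht.ne'] at h
  have h2 := mul_le_mul_of_nonneg_left h ht.le
  have h3 : t * (s / t - 1) = s - t := by field_simp
  linarith

variable {V : Type*} [NormedAddCommGroup V] [InnerProductSpace ℝ V] [FiniteDimensional ℝ V]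
  [MeasurableSpace V] [BorelSpace V]

lemma sqrt_half_sq_add : √(1 / 2 : ℝ) ^ 2 + √(1 / 2 : ℝ) ^ 2 = 1 := by
  rw [Real.sq_sqrt (by norm_num)]; norm_num

/-- Gaussian Poincaré inequality. -/
theorem gaussian_poincare {G : V → ℝ} {K : ℝ≥0} (hG : LipschitzWith K G) :
    ∫ x, G x ^ 2 ∂(stdGaussian V) - (∫ x, G x ∂(stdGaussian V)) ^ 2 ≤
      ∫ y, ‖fderiv ℝ G y‖ ^ 2 ∂(stdGaussian V) := by
  have hi : ∀ (G : V → ℝ) (K : ℝ≥0), LipschitzWith K G → Integrable G (stdGaussian V) :=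
    fun G K h ↦ h.hasExpGrowth.integrable h.continuous.aestronglyMeasurable
  have hi2 : ∀ (G : V → ℝ) (K : ℝ≥0), LipschitzWith K G →
      Integrable (fun x ↦ G x ^ 2) (stdGaussian V) :=
    fun G K h ↦ h.hasExpGrowth.pow_two.integrable (h.continuous.pow 2).aestronglyMeasurable
  have hc : ∀ (G : V → ℝ) (K : ℝ≥0), LipschitzWith K G → ∀ c,
      ∫ x, (G x - c) ^ 2 ∂(stdGaussian V) =
        ∫ x, G x ^ 2 ∂(stdGaussian V) - 2 * c * ∫ x, G x ∂(stdGaussian V) + c ^ 2 := by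
    intro G K h c
    rw [← (((hi2 G K h).hasInt.sub ((hi G K h).hasInt.const_mul (2 * c))).add
      (hasInt_const (c ^ 2))).2]
    exact integral_congr_ae (ae_of_all _ fun x ↦ by ring)
  have := le_integral_fderiv_sq_of_doubling (V := V) (w := fun _ ↦ 1) (κ := 1)
    (H := fun G ↦ ∫ x, G x ^ 2 ∂(stdGaussian V) - (∫ x, G x ∂(stdGaussian V)) ^ 2)
    continuous_const (fun _ ↦ zero_le_one) (fun t ↦ Real.one_le_exp (abs_nonneg t))
    ?_ ?_ ?_ ?_ hG
  · simpa using this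
  · intro G K hG
    set s := √(1 / 2 : ℝ) with hs
    set Φ : V × V → ℝ := fun p ↦ G (s • p.1 + s • p.2) with hΦ
    have hΦc : Continuous Φ := by have := hG.continuous; fun_prop
    have hΦg : HasExpGrowth Φ := hasExpGrowth_comp_affine hG.hasExpGrowth s s
    have hΦi := hΦg.integrable_prod hΦc.aestronglyMeasurable
    have hΦ2i := hΦg.pow_two.integrable_prod (hΦc.pow 2).aestronglyMeasurable
    set m : V → ℝ := fun y ↦ ∫ x, Φ (y, x) ∂(stdGaussian V) with hm
    set M := ∫ x, G x ∂(stdGaussian V) with hM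
    have hslice : ∀ y, LipschitzWith (K * ‖s‖₊) fun x ↦ Φ (y, x) :=
      fun y ↦ lipschitzWith_comp_affine hG (s • y) s
    have hml : LipschitzWith (K * ‖s‖₊) m := by
      refine LipschitzWith.of_dist_le_mul fun y z ↦ ?_
      rw [Real.dist_eq, hm]
      simp only
      rw [← integral_sub (hi _ _ (hslice y)) (hi _ _ (hslice z))]
      refine (abs_integral_le_integral_abs).trans ?_
      calc _ ≤ ∫ _ : V, (K * ‖s‖₊ : ℝ≥0) * dist y z ∂(stdGaussian V) := by
            refine integral_mono ((hi _ _ (hslice y)).sub (hi _ _ (hslice z))).abs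
              (integrable_const _) fun x ↦ ?_
            have := (lipschitzWith_comp_affine hG (s • x) s).dist_le_mul y z
            simpa only [Real.dist_eq, hΦ, add_comm] using this
        _ = _ := by simp
    have hMm : ∫ y, m y ∂(stdGaussian V) = M := by
      rw [hm, ← integral_prod _ hΦi]
      exact integral_smul_add_smul_stdGaussian sqrt_half_sq_add hG.continuous.aestronglyMeasurable
    have hT : ∫ p, Φ p ^ 2 ∂((stdGaussian V).prod (stdGaussian V)) =
        ∫ x, G x ^ 2 ∂(stdGaussian V) :=
      integral_smul_add_smul_stdGaussian sqrt_half_sq_add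
        (g := fun x ↦ G x ^ 2) (hG.continuous.pow 2).aestronglyMeasurable
    have hmi1 := hi _ _ hml
    have hmi2 := hi2 _ _ hml
    have hRHS : ∫ y, (∫ x, Φ (y, x) ^ 2 ∂(stdGaussian V) - m y ^ 2) ∂(stdGaussian V) =
        ∫ x, G x ^ 2 ∂(stdGaussian V) - ∫ y, m y ^ 2 ∂(stdGaussian V) := by
      rw [integral_sub hΦ2i.integral_prod_left hmi2, ← integral_prod _ hΦ2i, hT]
    have hmg := hml.hasExpGrowth
    have hA : Integrable (fun p : V × V ↦ Φ p * m p.1) ((stdGaussian V).prod (stdGaussian V)) :=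
      (hΦg.mul hmg.comp_fst).integrable_prod
        (hΦc.mul (hml.continuous.comp continuous_fst)).aestronglyMeasurable
    have hAv : ∫ p, Φ p * m p.1 ∂((stdGaussian V).prod (stdGaussian V)) =
        ∫ y, m y ^ 2 ∂(stdGaussian V) := by
      rw [integral_prod _ hA]
      simp only [integral_mul_const, sq]
      rfl
    have hsymm : ∀ p : V × V, Φ p.swap = Φ p := fun p ↦ by
      simp only [hΦ, Prod.fst_swap, Prod.snd_swap, add_comm]
    have hB : Integrable (fun p : V × V ↦ Φ p * m p.2) ((stdGaussian V).prod (stdGaussian V)) := by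
      simpa only [Function.comp_def, hsymm, Prod.fst_swap] using hA.swap
    have hBv : ∫ p, Φ p * m p.2 ∂((stdGaussian V).prod (stdGaussian V)) =
        ∫ y, m y ^ 2 ∂(stdGaussian V) := by
      rw [← hAv, ← integral_prod_swap]
      simp only [hsymm, Prod.snd_swap]
    have hE : Integrable (fun p : V × V ↦ m p.1 * m p.2)
        ((stdGaussian V).prod (stdGaussian V)) := hmi1.mul_prod hmi1
    have hmp : ∀ {f : V × V → ℝ} {v : ℝ}, Integrable f ((stdGaussian V).prod (stdGaussian V)) →
        ∫ p, f p ∂((stdGaussian V).prod (stdGaussian V)) = v →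
        HasInt ((stdGaussian V).prod (stdGaussian V)) f v := fun h h' ↦ ⟨h, h'⟩
    have hlow := ((((hmp hA hAv).const_mul 2).add ((hmp hB hBv).const_mul 2)).add
      ((hmi1.hasInt.comp_fst (stdGaussian V)).const_mul (2 * M))).add
      ((hmi1.hasInt.comp_snd (stdGaussian V)).const_mul (2 * M))
    have hup := (((((hmp hΦ2i hT).add (hmi2.hasInt.comp_fst (stdGaussian V))).add
      (hmi2.hasInt.comp_snd (stdGaussian V))).add
      ((hmp hE (integral_prod_mul _ _)).const_mul 2)).add
      ((hmp hΦi (v := M) (integral_smul_add_smul_stdGaussian sqrt_half_sq_add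
        hG.continuous.aestronglyMeasurable)).const_mul (2 * M))).add (hasInt_const (M ^ 2))
    have := hlow.mono hup fun p ↦ by nlinarith [sq_nonneg (Φ p - m p.1 - m p.2 + M)]
    rw [hMm] at this
    change _ ≤ 2 * ∫ y, (∫ x, Φ (y, x) ^ 2 ∂(stdGaussian V) - m y ^ 2) ∂(stdGaussian V)
    rw [hRHS]
    nlinarith
  · intro G K hG a b
    have := hG.continuous
    refine AEStronglyMeasurable.sub ?_ (AEStronglyMeasurable.pow ?_ 2)
    · exact (StronglyMeasurable.integral_prod_right' (f := fun p : V × V ↦ G (a • p.1 + b • p.2) ^ 2)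
        (Continuous.stronglyMeasurable (by fun_prop))).aestronglyMeasurable
    · exact (StronglyMeasurable.integral_prod_right' (f := fun p : V × V ↦ G (a • p.1 + b • p.2))
        (Continuous.stronglyMeasurable (by fun_prop))).aestronglyMeasurable
  · intro G K hG
    have h := hc G K hG (∫ x, G x ∂(stdGaussian V))
    have h0 : 0 ≤ ∫ x, (G x - ∫ x, G x ∂(stdGaussian V)) ^ 2 ∂(stdGaussian V) :=
      integral_nonneg fun x ↦ sq_nonneg _
    nlinarith
  · intro G K hG c
    have h := hc G K hG c
    simp only [one_mul]
    calc _ ≤ ∫ x, (G x - c) ^ 2 ∂(stdGaussian V) := by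
          nlinarith [sq_nonneg (∫ x, G x ∂(stdGaussian V) - c)]
      _ ≤ _ := by
          have hl : LipschitzWith K fun x ↦ G x - c := by
            simpa using hG.sub (LipschitzWith.const c)
          have hl2 : LipschitzWith K fun x ↦ |G x - c| := by
            have := (lipschitzWith_one_norm (E := ℝ)).comp hl
            rwa [one_mul] at this
          refine integral_mono (hi2 _ _ hl) ((hl.hasExpGrowth.pow_two.mul
            hl2.hasExpGrowth_exp).integrable ((hl.continuous.pow 2).mul
              hl2.continuous.rexp).aestronglyMeasurable) fun x ↦ ?_
          exact le_mul_of_one_le_right (sq_nonneg _) (Real.one_le_exp (abs_nonneg _))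

end GaussianInequalities

section GaussianLogSobolev

open ProbabilityTheory

variable {V : Type*} [NormedAddCommGroup V] [InnerProductSpace ℝ V] [FiniteDimensional ℝ V]
  [MeasurableSpace V] [BorelSpace V]

/-- The entropy of `exp G` under `μ`. -/
def entExp {Ω : Type*} [MeasurableSpace Ω] (μ : Measure Ω) (G : Ω → ℝ) : ℝ :=
  ∫ x, Real.exp (G x) * G x ∂μ - (∫ x, Real.exp (G x) ∂μ) * Real.log (∫ x, Real.exp (G x) ∂μ)

lemma lipschitzWith_log_integral_exp {V' : Type*} [NormedAddCommGroup V'] {Φ : V' → V → ℝ}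
    {K K' : ℝ≥0} (h : ∀ y, LipschitzWith K (Φ y)) (h' : ∀ x, LipschitzWith K' fun y ↦ Φ y x) :
    LipschitzWith K' fun y ↦ Real.log (∫ x, Real.exp (Φ y x) ∂(stdGaussian V)) := by
  have hi : ∀ y, Integrable (fun x ↦ Real.exp (Φ y x)) (stdGaussian V) := fun y ↦
    (h y).hasExpGrowth_exp.integrable (h y).continuous.rexp.aestronglyMeasurable
  refine LipschitzWith.of_le_add_mul K' fun y z ↦ ?_
  have hle : ∫ x, Real.exp (Φ y x) ∂(stdGaussian V) ≤
      ∫ x, Real.exp (K' * dist y z) * Real.exp (Φ z x) ∂(stdGaussian V) := by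
    refine integral_mono (hi y) ((hi z).const_mul _) fun x ↦ ?_
    simp only
    rw [← Real.exp_add]
    gcongr
    have := (h' x).dist_le_mul y z
    rw [Real.dist_eq] at this
    linarith [le_abs_self (Φ y x - Φ z x)]
  rw [integral_const_mul] at hle
  refine (Real.log_le_log (integral_exp_pos (hi y)) hle).trans (le_of_eq ?_)
  rw [Real.log_mul (Real.exp_ne_zero _) (integral_exp_pos (hi z)).ne', Real.log_exp, add_comm]

/-- Gaussian logarithmic Sobolev inequality. -/
theorem gaussian_logSobolev {G : V → ℝ} {K : ℝ≥0} (hG : LipschitzWith K G) :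
    entExp (stdGaussian V) G ≤
      1 / 2 * ∫ y, Real.exp (G y) * ‖fderiv ℝ G y‖ ^ 2 ∂(stdGaussian V) := by
  have hi : ∀ (G : V → ℝ) (K : ℝ≥0), LipschitzWith K G →
      Integrable (fun x ↦ Real.exp (G x)) (stdGaussian V) :=
    fun G K h ↦ h.hasExpGrowth_exp.integrable h.continuous.rexp.aestronglyMeasurable
  have hi2 : ∀ (G : V → ℝ) (K : ℝ≥0), LipschitzWith K G →
      Integrable (fun x ↦ Real.exp (G x) * G x) (stdGaussian V) :=
    fun G K h ↦ (h.hasExpGrowth_exp.mul h.hasExpGrowth).integrable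
      (h.continuous.rexp.mul h.continuous).aestronglyMeasurable
  refine le_integral_fderiv_sq_of_doubling (V := V) Real.continuous_exp
    (fun t ↦ (Real.exp_pos t).le) (fun t ↦ Real.exp_le_exp.2 (le_abs_self t))
    ?_ ?_ ?_ ?_ hG
  · intro G K hG
    set s := √(1 / 2 : ℝ) with hs
    set Φ : V × V → ℝ := fun p ↦ G (s • p.1 + s • p.2) with hΦ
    have hΦc : Continuous Φ := by have := hG.continuous; fun_prop
    have hslice : ∀ y, LipschitzWith (K * ‖s‖₊) fun x ↦ Φ (y, x) :=
      fun y ↦ lipschitzWith_comp_affine hG (s • y) s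
    have hsymm : ∀ p : V × V, Φ p.swap = Φ p := fun p ↦ by
      simp only [hΦ, Prod.fst_swap, Prod.snd_swap, add_comm]
    have hslice' : ∀ x, LipschitzWith (K * ‖s‖₊) fun y ↦ Φ (y, x) := fun x ↦ by
      simpa only [← hsymm (x, _), Prod.swap_prod_mk] using hslice x
    have hΦg : HasExpGrowth Φ := hasExpGrowth_comp_affine hG.hasExpGrowth s s
    have hΦe : HasExpGrowth fun p ↦ Real.exp (Φ p) :=
      hasExpGrowth_comp_affine hG.hasExpGrowth_exp s s
    have hΦi := hΦe.integrable_prod hΦc.rexp.aestronglyMeasurable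
    have hΦ2i := (hΦe.mul hΦg).integrable_prod (hΦc.rexp.mul hΦc).aestronglyMeasurable
    set u : V → ℝ := fun y ↦ Real.log (∫ x, Real.exp (Φ (y, x)) ∂(stdGaussian V)) with hu
    have hul : LipschitzWith (K * ‖s‖₊) u :=
      lipschitzWith_log_integral_exp (Φ := fun y x ↦ Φ (y, x)) hslice hslice'
    have hue : ∀ y, ∫ x, Real.exp (Φ (y, x)) ∂(stdGaussian V) = Real.exp (u y) := fun y ↦
      (Real.exp_log (integral_exp_pos (hi _ _ (hslice y)))).symm
    set M := ∫ x, Real.exp (G x) ∂(stdGaussian V) with hM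
    have hMpos : 0 < M := integral_exp_pos (hi _ _ hG)
    have hΦv : ∫ p, Real.exp (Φ p) ∂((stdGaussian V).prod (stdGaussian V)) = M :=
      integral_smul_add_smul_stdGaussian sqrt_half_sq_add (g := fun x ↦ Real.exp (G x))
        hG.continuous.rexp.aestronglyMeasurable
    have hMm : ∫ y, Real.exp (u y) ∂(stdGaussian V) = M := by
      rw [← hΦv, integral_prod _ hΦi]
      simp only [hue]
    have hT : ∫ p, Real.exp (Φ p) * Φ p ∂((stdGaussian V).prod (stdGaussian V)) =
        ∫ x, Real.exp (G x) * G x ∂(stdGaussian V) :=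
      integral_smul_add_smul_stdGaussian sqrt_half_sq_add (g := fun x ↦ Real.exp (G x) * G x)
        (hG.continuous.rexp.mul hG.continuous).aestronglyMeasurable
    have hA : Integrable (fun p : V × V ↦ Real.exp (Φ p) * u p.1)
        ((stdGaussian V).prod (stdGaussian V)) :=
      (hΦe.mul hul.hasExpGrowth.comp_fst).integrable_prod
        (hΦc.rexp.mul (hul.continuous.comp continuous_fst)).aestronglyMeasurable
    have hAv : ∫ p, Real.exp (Φ p) * u p.1 ∂((stdGaussian V).prod (stdGaussian V)) =
        ∫ y, Real.exp (u y) * u y ∂(stdGaussian V) := by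
      rw [integral_prod _ hA]
      simp only [integral_mul_const, hue]
    have hB : Integrable (fun p : V × V ↦ Real.exp (Φ p) * u p.2)
        ((stdGaussian V).prod (stdGaussian V)) := by
      simpa only [Function.comp_def, hsymm, Prod.fst_swap] using hA.swap
    have hBv : ∫ p, Real.exp (Φ p) * u p.2 ∂((stdGaussian V).prod (stdGaussian V)) =
        ∫ y, Real.exp (u y) * u y ∂(stdGaussian V) := by
      rw [← hAv, ← integral_prod_swap]
      simp only [hsymm, Prod.snd_swap]
    have hRHS : ∫ y, entExp (stdGaussian V) (fun x ↦ Φ (y, x)) ∂(stdGaussian V) =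
        ∫ x, Real.exp (G x) * G x ∂(stdGaussian V) -
          ∫ y, Real.exp (u y) * u y ∂(stdGaussian V) := by
      simp only [entExp, hue, Real.log_exp]
      rw [integral_sub hΦ2i.integral_prod_left (hi2 _ _ hul), ← integral_prod _ hΦ2i, hT]
    have hmp : ∀ {f : V × V → ℝ} {v : ℝ}, Integrable f ((stdGaussian V).prod (stdGaussian V)) →
        ∫ p, f p ∂((stdGaussian V).prod (stdGaussian V)) = v →
        HasInt ((stdGaussian V).prod (stdGaussian V)) f v := fun h h' ↦ ⟨h, h'⟩
    have hlow := (hmp hA hAv).add (hmp hB hBv)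
    have hup := (((hmp hΦ2i hT).add ((hmp hΦi hΦv).const_mul (Real.log M))).add
      ((hmp ((hi _ _ hul).mul_prod (hi _ _ hul)) (integral_prod_mul (fun y ↦ Real.exp (u y))
        (fun y ↦ Real.exp (u y)))).const_mul M⁻¹)).sub
      (hmp hΦi hΦv)
    have := hlow.mono hup fun p ↦ by
      have h := sub_le_mul_log_sub_log (t := Real.exp (Φ p))
        (s := M⁻¹ * (Real.exp (u p.1) * Real.exp (u p.2))) (by positivity) (by positivity)
      rw [Real.log_mul (by positivity) (by positivity), Real.log_mul (by positivity)
        (by positivity), Real.log_inv, Real.log_exp, Real.log_exp, Real.log_exp] at h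
      linarith
    rw [hMm, inv_mul_cancel_left₀ hMpos.ne'] at this
    change _ ≤ 2 * ∫ y, entExp (stdGaussian V) (fun x ↦ Φ (y, x)) ∂(stdGaussian V)
    rw [hRHS, entExp, ← hM]
    linarith
  · intro G K hG a b
    have := hG.continuous
    have h1 : StronglyMeasurable fun y : V ↦
        ∫ x, Real.exp (G (a • y + b • x)) ∂(stdGaussian V) :=
      StronglyMeasurable.integral_prod_right' (f := fun p : V × V ↦
        Real.exp (G (a • p.1 + b • p.2))) (Continuous.stronglyMeasurable (by fun_prop))
    have h2 : StronglyMeasurable fun y : V ↦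
        ∫ x, Real.exp (G (a • y + b • x)) * G (a • y + b • x) ∂(stdGaussian V) :=
      StronglyMeasurable.integral_prod_right' (f := fun p : V × V ↦
        Real.exp (G (a • p.1 + b • p.2)) * G (a • p.1 + b • p.2))
        (Continuous.stronglyMeasurable (by fun_prop))
    exact (h2.sub (h1.mul h1.measurable.log.stronglyMeasurable)).aestronglyMeasurable
  · intro G K hG
    set M := ∫ x, Real.exp (G x) ∂(stdGaussian V) with hM
    have hMpos : 0 < M := integral_exp_pos (hi _ _ hG)
    have hlow := (hi _ _ hG).hasInt.sub (hasInt_const (μ := stdGaussian V) M)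
    have hup := (hi2 _ _ hG).hasInt.sub ((hi _ _ hG).hasInt.const_mul (Real.log M))
    have := hlow.mono hup fun x ↦ by
      have h := sub_le_mul_log_sub_log hMpos (Real.exp_pos (G x))
      rw [Real.log_exp] at h
      linarith
    rw [entExp, ← hM]
    linarith
  · intro G K hG c
    set M := ∫ x, Real.exp (G x) ∂(stdGaussian V) with hM
    have hMpos : 0 < M := integral_exp_pos (hi _ _ hG)
    have h := sub_le_mul_log_sub_log (Real.exp_pos c) hMpos
    rw [Real.log_exp] at h
    have hl : LipschitzWith K fun x ↦ G x - c := by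
      simpa using hG.sub (LipschitzWith.const c)
    have hl2 : LipschitzWith K fun x ↦ |G x - c| := by
      have := (lipschitzWith_one_norm (E := ℝ)).comp hl
      rwa [one_mul] at this
    have hlow := (((hi2 _ _ hG).hasInt.sub ((hi _ _ hG).hasInt.const_mul c)).sub
      (hi _ _ hG).hasInt).add (hasInt_const (Real.exp c))
    have hup := ((((hl.hasExpGrowth.pow_two.mul hl2.hasExpGrowth_exp).integrable
      ((hl.continuous.pow 2).mul hl2.continuous.rexp).aestronglyMeasurable).const_mul
        (Real.exp c)).hasInt).const_mul (1 / 2)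
    have := hlow.mono hup fun x ↦ by
      have h := mul_le_mul_of_nonneg_left (mul_exp_sub_exp_add_one_le (G x - c))
        (Real.exp_pos c).le
      have h1 : Real.exp (G x) = Real.exp c * Real.exp (G x - c) := by
        rw [← Real.exp_add, add_sub_cancel]
      rw [h1]
      linarith
    rw [entExp, ← hM]
    linarith

end GaussianLogSobolev

section Polar

open ProbabilityTheory

lemma map_toSphere_apply_univ (n : ℕ) : ((volume : Measure (E n)).toSphere.map Subtype.val)
    Set.univ = (volume : Measure (E n)).toSphere Set.univ := by
  rw [Measure.map_apply measurable_subtype_coe MeasurableSet.univ, Set.preimage_univ]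

instance isProbabilityMeasure_sphMeasure [NeZero n] : IsProbabilityMeasure (sphMeasure n) := by
  refine ⟨?_⟩
  rw [sphMeasure, Measure.smul_apply, smul_eq_mul, map_toSphere_apply_univ]
  refine ENNReal.inv_mul_cancel ?_ (measure_ne_top _ _)
  rw [Ne, Measure.measure_univ_eq_zero]
  exact Measure.toSphere_ne_zero _

lemma ae_norm_eq_one : ∀ᵐ θ ∂sphMeasure n, ‖θ‖ = 1 := by
  refine Measure.ae_smul_measure ?_ _
  rw [ae_map_iff measurable_subtype_coe.aemeasurable (measurableSet_eq_fun (by fun_prop) (by fun_prop))]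
  exact ae_of_all _ fun θ ↦ by simp

/-- Radial and angular parts of a standard Gaussian vector are independent, the angular part
being uniform on the sphere. -/
theorem map_polar_stdGaussian [NeZero n] :
    (stdGaussian (E n)).map (fun x ↦ (‖x‖, ‖x‖⁻¹ • x)) =
      ((stdGaussian (E n)).map norm).prod (sphMeasure n) := by
  obtain ⟨N, hN, hmap⟩ : ∃ N : Measure ℝ, SFinite N ∧
      (stdGaussian (E n)).map (fun x ↦ (‖x‖, ‖x‖⁻¹ • x)) = N.prod (sphMeasure n) := by
    set g : ℝ → ℝ≥0∞ := fun r ↦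
      ENNReal.ofReal ((2 * Real.pi) ^ (-(Module.finrank ℝ (E n) : ℝ) / 2) *
        Real.exp (-(1 / 2) * r ^ 2)) with hg
    have hgm : Measurable g := by fun_prop
    set I := Measure.volumeIoiPow (Module.finrank ℝ (E n) - 1)
    set τ := (volume : Measure (E n)).toSphere
    set N' := (I.withDensity fun r ↦ g r).map Subtype.val with hN'
    have hgm' : Measurable fun r : Set.Ioi (0 : ℝ) ↦ g r := hgm.comp measurable_subtype_coe
    have hIg : SFinite (I.withDensity fun r ↦ g r) := inferInstance
    have hpre : (stdGaussian (E n)).map (fun x ↦ (‖x‖, ‖x‖⁻¹ • x)) =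
        N'.prod (τ.map Subtype.val) := by
      refine Measure.ext_of_lintegral _ fun F hF ↦ ?_
      have hmeas : Measurable fun x : E n ↦ (‖x‖, ‖x‖⁻¹ • x) := by fun_prop
      have hFm : Measurable fun x : E n ↦ F (‖x‖, ‖x‖⁻¹ • x) := hF.comp hmeas
      have hgn : Measurable fun x : E n ↦ g ‖x‖ := hgm.comp measurable_norm
      have hFs : Measurable fun z : sphere (0 : E n) 1 × Set.Ioi (0 : ℝ) ↦
          F ((z.2 : ℝ), (z.1 : E n)) :=
        hF.comp ((measurable_subtype_coe.comp measurable_snd).prodMk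
          (measurable_subtype_coe.comp measurable_fst))
      rw [lintegral_map hF hmeas, stdGaussian_eq_withDensity,
        lintegral_withDensity_eq_lintegral_mul _ hgn hFm,
        ← restrict_compl_singleton (μ := (volume : Measure (E n))) 0,
        ← lintegral_subtype_comap (measurableSet_singleton _).compl,
        hN', Measure.map_prod_map _ _ measurable_subtype_coe measurable_subtype_coe,
        lintegral_map hF (by fun_prop), ← lintegral_prod_swap, prod_withDensity_right hgm']
      refine Eq.trans ?_ (lintegral_withDensity_eq_lintegral_mul (τ.prod I)
        (hgm'.comp measurable_snd) hFs).symm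
      rw [← (volume : Measure (E n)).measurePreserving_homeomorphUnitSphereProd.lintegral_comp_emb
          (Homeomorph.measurableEmbedding _)]
      refine lintegral_congr fun x ↦ ?_
      simp [hg]
    refine ⟨((τ.map Subtype.val) Set.univ) • N', inferInstance, ?_⟩
    rw [hpre, sphMeasure, Measure.prod_smul_left, Measure.prod_smul_right, smul_smul,
      ENNReal.mul_inv_cancel, one_smul]
    · rw [map_toSphere_apply_univ, Ne, Measure.measure_univ_eq_zero]
      exact Measure.toSphere_ne_zero _
    · rw [map_toSphere_apply_univ]
      exact measure_ne_top _ _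
  have hfst : (stdGaussian (E n)).map norm = N := by
    have := congrArg (Measure.map Prod.fst) hmap
    rw [Measure.map_map measurable_fst (by fun_prop), Measure.map_fst_prod, measure_univ,
      one_smul] at this
    exact this
  rw [hfst, hmap]

lemma HasInt.polar [NeZero n] {A : ℝ → ℝ} {B : E n → ℝ} {a b : ℝ} (hA : Measurable A)
    (hAi : HasInt (stdGaussian (E n)) (fun x ↦ A ‖x‖) a) (hB : HasInt (sphMeasure n) B b) :
    HasInt (stdGaussian (E n)) (fun x ↦ A ‖x‖ * B (‖x‖⁻¹ • x)) (a * b) := by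
  have hmeas : Measurable fun x : E n ↦ (‖x‖, ‖x‖⁻¹ • x) := by fun_prop
  have hAN : Integrable A ((stdGaussian (E n)).map norm) :=
    (integrable_map_measure hA.aestronglyMeasurable measurable_norm.aemeasurable).2 hAi.1
  have hprob : IsProbabilityMeasure ((stdGaussian (E n)).map norm) :=
    Measure.isProbabilityMeasure_map measurable_norm.aemeasurable
  have hprod := hAN.mul_prod hB.1
  have hv := integral_prod_mul (μ := (stdGaussian (E n)).map norm) (ν := sphMeasure n) A B
  rw [← map_polar_stdGaussian] at hprod hv
  refine ⟨(integrable_map_measure hprod.1 hmeas.aemeasurable).1 hprod, ?_⟩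
  rw [integral_map hmeas.aemeasurable hprod.1] at hv
  rw [hv, hB.2, integral_map measurable_norm.aemeasurable hA.aestronglyMeasurable, hAi.2]

lemma hasInt_sq_norm_stdGaussian : HasInt (stdGaussian (E n)) (fun x ↦ ‖x‖ ^ 2) n := by
  have h : ∀ i : Fin n, HasInt (stdGaussian (E n)) (fun x ↦ (x i) ^ 2) 1 := by
    intro i
    have hi := integral_sq_dual_stdGaussian (EuclideanSpace.proj (𝕜 := ℝ) i : E n →L[ℝ] ℝ)
    have hn : ‖(EuclideanSpace.proj (𝕜 := ℝ) i : E n →L[ℝ] ℝ)‖ = 1 := by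
      refine le_antisymm (ContinuousLinearMap.opNorm_le_bound _ zero_le_one fun x ↦ ?_) ?_
      · simpa using PiLp.norm_apply_le x i
      · have := (EuclideanSpace.proj (𝕜 := ℝ) i : E n →L[ℝ] ℝ).le_opNorm
          (EuclideanSpace.single i 1)
        simpa using this
    rw [hn, one_pow] at hi
    refine ⟨?_, hi⟩
    have hl := (EuclideanSpace.proj (𝕜 := ℝ) i : E n →L[ℝ] ℝ).lipschitz
    exact hl.hasExpGrowth.pow_two.integrable (hl.continuous.pow 2).aestronglyMeasurable
  refine ⟨?_, ?_⟩
  · simp only [EuclideanSpace.real_norm_sq_eq]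
    exact integrable_finsetSum _ fun i _ ↦ (h i).1
  · simp only [EuclideanSpace.real_norm_sq_eq]
    rw [integral_finsetSum _ fun i _ ↦ (h i).1]
    simp [(h _).2]

lemma integral_rpow_mul_exp_pos {q : ℝ} (hq : -1 < q) :
    0 < ∫ x in Set.Ioi (0 : ℝ), x ^ q * Real.exp (-(1 / 2) * x ^ (2 : ℝ)) := by
  rw [integral_rpow_mul_exp_neg_mul_rpow two_pos hq (by norm_num)]
  have := Real.Gamma_pos_of_pos (s := (q + 1) / 2) (by linarith)
  positivity

lemma hasInt_inv_sq_norm_stdGaussian (hn : 3 ≤ n) :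
    HasInt (stdGaussian (E n)) (fun x ↦ (‖x‖ ^ 2)⁻¹) (1 / ((n : ℝ) - 2)) := by
  have : NeZero n := ⟨by omega⟩
  have hn' : (3 : ℝ) ≤ n := by exact_mod_cast hn
  set I : ℝ → ℝ := fun q ↦ ∫ x in Set.Ioi (0 : ℝ), x ^ q * Real.exp (-(1 / 2) * x ^ (2 : ℝ))
    with hI
  set c : ℝ := (2 * Real.pi) ^ (-(Module.finrank ℝ (E n) : ℝ) / 2) with hc
  have hcpos : 0 < c := by positivity
  have hII : I (n - 1) = (n - 2) * I (n - 3) := by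
    simp only [hI]
    rw [integral_rpow_mul_exp_neg_mul_rpow two_pos (by linarith) (by norm_num),
      integral_rpow_mul_exp_neg_mul_rpow two_pos (by linarith) (by norm_num)]
    have e1 : ((n : ℝ) - 1 + 1) / 2 = ((n : ℝ) - 3 + 1) / 2 + 1 := by ring
    have e2 : -((n : ℝ) - 1 + 1) / 2 = -((n : ℝ) - 3 + 1) / 2 - 1 := by ring
    have hx : ((n : ℝ) - 3 + 1) / 2 ≠ 0 := by
      have : 0 < ((n : ℝ) - 3 + 1) / 2 := by linarith
      exact this.ne'
    rw [e1, e2, Real.Gamma_add_one hx, Real.rpow_sub_one (by norm_num)]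
    ring
  have hdens : ∀ (f : ℝ → ℝ), ∫ x, f ‖x‖ ∂(stdGaussian (E n)) =
      ∫ x : E n, c * Real.exp (-(1 / 2) * ‖x‖ ^ 2) * f ‖x‖ := by
    intro f
    rw [stdGaussian_eq_withDensity,
      integral_withDensity_eq_integral_toReal_smul (by fun_prop) (by simp)]
    refine integral_congr_ae (ae_of_all _ fun x ↦ ?_)
    simp only [smul_eq_mul]
    rw [ENNReal.toReal_ofReal (by positivity)]
  have hpol : ∀ (f : ℝ → ℝ) (q : ℝ), (∀ y : ℝ, 0 < y → y ^ (n - 1) * f y = y ^ q) →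
      ∫ x, f ‖x‖ ∂(stdGaussian (E n)) =
        (n : ℝ) * (volume : Measure (E n)).real (ball 0 1) * c * I q := by
    intro f q hf
    rw [hdens, integral_fun_norm_addHaar (volume : Measure (E n))
      (fun r ↦ c * Real.exp (-(1 / 2) * r ^ 2) * f r), finrank_euclideanSpace_fin]
    have : ∫ y in Set.Ioi (0 : ℝ), y ^ (n - 1) • (c * Real.exp (-(1 / 2) * y ^ 2) * f y) =
        c * I q := by
      rw [hI, ← integral_const_mul]
      refine setIntegral_congr_fun measurableSet_Ioi fun y hy ↦ ?_
      simp only [smul_eq_mul]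
      rw [← hf y hy, Real.rpow_two]
      ring
    rw [this]
    simp only [nsmul_eq_mul, smul_eq_mul]
    ring
  have hcast : ((n - 1 : ℕ) : ℝ) = (n : ℝ) - 1 := by
    rw [Nat.cast_sub (by omega), Nat.cast_one]
  have h1 := hpol (fun _ ↦ 1) (n - 1) fun y hy ↦ by
    rw [mul_one, ← hcast, Real.rpow_natCast]
  have h2 := hpol (fun r ↦ (r ^ 2)⁻¹) (n - 3) fun y hy ↦ by
    rw [← Real.rpow_natCast y (n - 1), hcast, ← Real.rpow_two, ← Real.rpow_neg hy.le,
      ← Real.rpow_add hy]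
    congr 1
    ring
  simp only [integral_const, probReal_univ, one_smul] at h1
  rw [hII] at h1
  have hI3 : 0 < I (n - 3) := integral_rpow_mul_exp_pos (by linarith)
  have hv : ∫ x, (‖x‖ ^ 2)⁻¹ ∂(stdGaussian (E n)) = 1 / ((n : ℝ) - 2) := by
    rw [h2, eq_div_iff (by linarith)]
    linear_combination -h1
  refine ⟨?_, hv⟩
  by_contra hcon
  rw [integral_undef hcon] at hv
  have : 0 < 1 / ((n : ℝ) - 2) := by apply one_div_pos.2; linarith
  exact this.ne hv

end Polar

section RadialExtension

lemma norm_mul_norm_normalize_sub_le {x y : E n} (hx : x ≠ 0) (hy : y ≠ 0) :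
    ‖x‖ * ‖‖x‖⁻¹ • x - ‖y‖⁻¹ • y‖ ≤ 2 * ‖x - y‖ := by
  have hx' : ‖x‖ ≠ 0 := norm_ne_zero_iff.2 hx
  have hy' : ‖y‖ ≠ 0 := norm_ne_zero_iff.2 hy
  have h1 : ‖x‖ * ‖‖x‖⁻¹ • x - ‖y‖⁻¹ • y‖ = ‖(x - y) + ((‖y‖ - ‖x‖) * ‖y‖⁻¹) • y‖ := by
    rw [← norm_norm x, ← norm_smul, norm_norm, smul_sub, smul_smul, smul_smul,
      mul_inv_cancel₀ hx', one_smul, sub_mul, mul_inv_cancel₀ hy', sub_smul, one_smul]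
    congr 1
    abel
  have h2 : ‖((‖y‖ - ‖x‖) * ‖y‖⁻¹) • y‖ ≤ ‖x - y‖ := by
    rw [norm_smul, norm_mul, norm_inv, norm_norm, mul_assoc, inv_mul_cancel₀ hy', mul_one,
      Real.norm_eq_abs, norm_sub_rev]
    exact abs_norm_sub_norm_le y x
  rw [h1]
  linarith [norm_add_le (x - y) (((‖y‖ - ‖x‖) * ‖y‖⁻¹) • y)]

lemma norm_normalize {x : E n} (hx : x ≠ 0) : ‖‖x‖⁻¹ • x‖ = 1 := by
  rw [norm_smul, norm_inv, norm_norm, inv_mul_cancel₀ (norm_ne_zero_iff.2 hx)]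

lemma exists_bounds_of_contDiff {w : E n → ℝ} (hw : ContDiff ℝ 1 w) :
    ∃ M K : ℝ, 0 ≤ M ∧ 0 ≤ K ∧ (∀ x, ‖x‖ = 1 → |w x| ≤ M) ∧
      ∀ x y, ‖x‖ = 1 → ‖y‖ = 1 → |w x - w y| ≤ K * ‖x - y‖ := by
  obtain ⟨K, hK⟩ := hw.contDiffOn.exists_lipschitzOnWith one_ne_zero
    (convex_closedBall (0 : E n) 1) (isCompact_closedBall 0 1)
  obtain ⟨M, hM⟩ := (isCompact_closedBall (0 : E n) 1).exists_bound_of_continuousOn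
    hw.continuous.continuousOn
  refine ⟨|M|, K, abs_nonneg M, K.2, fun x hx ↦ ?_, fun x y hx hy ↦ ?_⟩
  · exact (hM x (by simp [hx])).trans (le_abs_self M)
  · have := hK.dist_le_mul x (by simp [hx]) y (by simp [hy])
    rwa [Real.dist_eq, dist_eq_norm] at this

/-- The function `ρ(|x|) w(x/|x|)`. -/
def radialExt (ρ : ℝ → ℝ) (w : E n → ℝ) (x : E n) : ℝ := ρ ‖x‖ * w (‖x‖⁻¹ • x)

lemma lipschitzWith_radialExt {w : E n → ℝ} (hw : ContDiff ℝ 1 w) {ρ : ℝ → ℝ} {C : ℝ}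
    (hC : 0 ≤ C) (hρ : ∀ r s, 0 ≤ r → 0 ≤ s → |ρ r - ρ s| ≤ C * |r - s|) (h0 : ρ 0 = 0) :
    ∃ K, LipschitzWith K (radialExt ρ w) := by
  obtain ⟨M, K, hM0, hK0, hM, hK⟩ := exists_bounds_of_contDiff hw
  have hρ' : ∀ r, 0 ≤ r → |ρ r| ≤ C * r := fun r hr ↦ by
    simpa [h0, abs_of_nonneg hr] using hρ r 0 hr le_rfl
  have hz : ∀ y : E n, |radialExt ρ w y| ≤ C * M * ‖y‖ := by
    intro y
    rcases eq_or_ne y 0 with rfl | hy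
    · simp [radialExt, h0]
    · rw [radialExt, abs_mul]
      calc |ρ ‖y‖| * |w (‖y‖⁻¹ • y)| ≤ (C * ‖y‖) * M := by
            gcongr
            · exact hρ' _ (norm_nonneg y)
            · exact hM _ (norm_normalize hy)
        _ = C * M * ‖y‖ := by ring
  have h0' : radialExt ρ w 0 = 0 := by simp [radialExt, h0]
  refine ⟨Real.toNNReal (C * M + 2 * C * K), LipschitzWith.of_dist_le_mul fun x y ↦ ?_⟩
  rw [Real.coe_toNNReal _ (by positivity), Real.dist_eq, dist_eq_norm]
  rcases eq_or_ne x 0 with rfl | hx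
  · rw [h0', zero_sub, abs_neg, zero_sub, norm_neg]
    refine (hz y).trans ?_
    gcongr
    nlinarith [mul_nonneg hC hK0]
  rcases eq_or_ne y 0 with rfl | hy
  · rw [h0', sub_zero, sub_zero]
    refine (hz x).trans ?_
    gcongr
    nlinarith [mul_nonneg hC hK0]
  have e : radialExt ρ w x - radialExt ρ w y =
      ρ ‖x‖ * (w (‖x‖⁻¹ • x) - w (‖y‖⁻¹ • y)) + (ρ ‖x‖ - ρ ‖y‖) * w (‖y‖⁻¹ • y) := by
    simp only [radialExt]; ring
  rw [e]
  refine (abs_add_le _ _).trans ?_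
  rw [abs_mul, abs_mul]
  have h1 : |ρ ‖x‖| * |w (‖x‖⁻¹ • x) - w (‖y‖⁻¹ • y)| ≤ 2 * C * K * ‖x - y‖ := by
    calc _ ≤ (C * ‖x‖) * (K * ‖‖x‖⁻¹ • x - ‖y‖⁻¹ • y‖) := by
          gcongr
          · exact hρ' _ (norm_nonneg x)
          · exact hK _ _ (norm_normalize hx) (norm_normalize hy)
      _ = C * K * (‖x‖ * ‖‖x‖⁻¹ • x - ‖y‖⁻¹ • y‖) := by ring
      _ ≤ C * K * (2 * ‖x - y‖) := by
          exact mul_le_mul_of_nonneg_left (norm_mul_norm_normalize_sub_le hx hy) (by positivity)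
      _ = _ := by ring
  have h2 : |ρ ‖x‖ - ρ ‖y‖| * |w (‖y‖⁻¹ • y)| ≤ C * M * ‖x - y‖ := by
    calc _ ≤ (C * ‖x - y‖) * M := by
          gcongr
          · refine (hρ _ _ (norm_nonneg x) (norm_nonneg y)).trans ?_
            gcongr
            exact abs_norm_sub_norm_le x y
          · exact hM _ (norm_normalize hy)
      _ = _ := by ring
  linarith

lemma inner_sgrad_self (w : E n → ℝ) {θ : E n} (hθ : ‖θ‖ = 1) : ⟪sgrad w θ, θ⟫ = 0 := by
  rw [sgrad, inner_sub_left, real_inner_smul_left, real_inner_self_eq_norm_sq, hθ]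
  ring

lemma norm_sgrad_sq (w : E n → ℝ) {θ : E n} (hθ : ‖θ‖ = 1) :
    ‖sgrad w θ‖ ^ 2 = ‖gradient w θ‖ ^ 2 - ⟪gradient w θ, θ⟫ ^ 2 := by
  rw [sgrad, norm_sub_sq_real, real_inner_smul_right, norm_smul, hθ, mul_one, Real.norm_eq_abs,
    sq_abs]
  ring

lemma hasFDerivAt_norm {x : E n} (hx : x ≠ 0) :
    HasFDerivAt (fun y : E n ↦ ‖y‖) (innerSL ℝ (‖x‖⁻¹ • x)) x := by
  have hx' : ‖x‖ ≠ 0 := norm_ne_zero_iff.2 hx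
  have h := (hasStrictFDerivAt_norm_sq x).hasFDerivAt.sqrt (pow_ne_zero 2 hx')
  simp only [Real.sqrt_sq (norm_nonneg _)] at h
  refine h.congr_fderiv ?_
  ext y
  simp
  field_simp

/-- The gradient of a radial extension, split into radial and tangential parts. -/
lemma norm_fderiv_radialExt_sq {w : E n → ℝ} (hw : ContDiff ℝ 1 w) {ρ : ℝ → ℝ} {ρ' : ℝ}
    {x : E n} (hx : x ≠ 0) (hρ : HasDerivAt ρ ρ' ‖x‖) :
    ‖fderiv ℝ (radialExt ρ w) x‖ ^ 2 =
      ρ' ^ 2 * w (‖x‖⁻¹ • x) ^ 2 + (ρ ‖x‖ / ‖x‖) ^ 2 * ‖sgrad w (‖x‖⁻¹ • x)‖ ^ 2 := by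
  have hx' : ‖x‖ ≠ 0 := norm_ne_zero_iff.2 hx
  set θ := ‖x‖⁻¹ • x with hθ
  have hθ1 : ‖θ‖ = 1 := norm_normalize hx
  have hN := hasFDerivAt_norm hx
  rw [← hθ] at hN
  have hρN : HasFDerivAt (fun y : E n ↦ ρ ‖y‖) (ρ' • innerSL ℝ θ) x :=
    hρ.comp_hasFDerivAt x hN
  have hinv : HasFDerivAt (fun y : E n ↦ ‖y‖⁻¹) ((-(‖x‖ ^ 2)⁻¹) • innerSL ℝ θ) x :=
    (hasDerivAt_inv hx').comp_hasFDerivAt x hN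
  have hnorm := hinv.smul (hasFDerivAt_id x)
  have hwθ : HasFDerivAt w (fderiv ℝ w θ) θ :=
    (hw.differentiable one_ne_zero θ).hasFDerivAt
  have hwc := HasFDerivAt.comp x hwθ hnorm
  have hfin := hρN.mul hwc
  have hval : fderiv ℝ (radialExt ρ w) x =
      innerSL ℝ ((ρ' * w θ) • θ + (ρ ‖x‖ / ‖x‖) • sgrad w θ) := by
    refine HasFDerivAt.fderiv (hfin.congr_fderiv ?_)
    ext h
    have hx2 : x = ‖x‖ • θ := by rw [hθ, smul_smul, mul_inv_cancel₀ hx', one_smul]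
    have hg : ∀ y, fderiv ℝ w θ y = ⟪gradient w θ, y⟫ := fun y ↦ by
      rw [← toDual_gradient, InnerProductSpace.toDual_apply_apply]
    simp only [add_apply, smul_apply,
      ContinuousLinearMap.comp_apply, ContinuousLinearMap.smulRight_apply,
      ContinuousLinearMap.id_apply, id_eq, innerSL_apply_apply, smul_eq_mul, Function.comp, hg,
      inner_add_left, inner_add_right, real_inner_smul_left, real_inner_smul_right, sgrad,
      inner_sub_left]
    have hwx : w (((fun y : E n ↦ ‖y‖⁻¹) • id) x) = w θ := rfl
    have hgx : ⟪gradient w θ, x⟫ = ‖x‖ * ⟪gradient w θ, θ⟫ := by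
      conv_lhs => rw [hx2, real_inner_smul_right]
    rw [hwx, hgx]
    field_simp
    ring
  rw [hval, innerSL_apply_norm, norm_add_sq_real, real_inner_smul_left, real_inner_smul_right,
    real_inner_comm, inner_sgrad_self w hθ1, norm_smul _ θ, norm_smul _ (sgrad w θ), hθ1]
  simp only [mul_pow, Real.norm_eq_abs, sq_abs]
  ring

end RadialExtension

section SphereInequalities

open ProbabilityTheory Topology

lemma integrable_sphMeasure [NeZero n] {F : Type*} [NormedAddCommGroup F] {w : E n → F}
    (hw : Continuous w) : Integrable w (sphMeasure n) := by
  obtain ⟨M, hM⟩ := (isCompact_sphere (0 : E n) 1).exists_bound_of_continuousOn hw.continuousOn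
  refine Integrable.of_bound (C := M) hw.aestronglyMeasurable ?_
  filter_upwards [ae_norm_eq_one] with θ hθ
  exact hM θ (by simp [hθ])

lemma continuous_gradient {w : E n → ℝ} (hw : ContDiff ℝ 1 w) : Continuous (gradient w) :=
  (InnerProductSpace.toDual ℝ (E n)).symm.continuous.comp (hw.continuous_fderiv one_ne_zero)

lemma continuous_sgrad {w : E n → ℝ} (hw : ContDiff ℝ 1 w) : Continuous (sgrad w) := by
  have := continuous_gradient hw
  unfold sgrad
  fun_prop

lemma ae_stdGaussian_ne_zero [NeZero n] : ∀ᵐ x ∂stdGaussian (E n), x ≠ 0 :=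
  stdGaussian_absolutelyContinuous.ae_le (Measure.ae_ne volume 0)

lemma hasInt_inner_stdGaussian (v : E n) : HasInt (stdGaussian (E n)) (fun x ↦ ⟪v, x⟫) 0 := by
  have h : Integrable (fun x ↦ ⟪v, x⟫) (stdGaussian (E n)) :=
    (innerSL ℝ v).lipschitz.hasExpGrowth.integrable
      (innerSL ℝ v).continuous.aestronglyMeasurable
  refine ⟨h, ?_⟩
  exact integral_strongDual_stdGaussian (innerSL ℝ v)

lemma hasInt_inner_sq_stdGaussian (v : E n) :
    HasInt (stdGaussian (E n)) (fun x ↦ ⟪v, x⟫ ^ 2) (‖v‖ ^ 2) := by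
  refine ⟨(innerSL ℝ v).lipschitz.hasExpGrowth.pow_two.integrable
      ((innerSL ℝ v).continuous.pow 2).aestronglyMeasurable, ?_⟩
  rw [← innerSL_apply_norm ℝ v]
  exact integral_sq_dual_stdGaussian (innerSL ℝ v)

lemma integrable_norm_stdGaussian : Integrable (fun x : E n ↦ ‖x‖) (stdGaussian (E n)) :=
  lipschitzWith_one_norm.hasExpGrowth.integrable continuous_norm.aestronglyMeasurable

lemma integral_inner_sphMeasure [NeZero n] (v : E n) : ∫ θ, ⟪v, θ⟫ ∂sphMeasure n = 0 := by
  have hc : Continuous fun θ : E n ↦ ⟪v, θ⟫ := by fun_prop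
  have h := HasInt.polar measurable_id (A := id) integrable_norm_stdGaussian.hasInt
    (integrable_sphMeasure hc).hasInt
  have hpos : 0 < ∫ x : E n, ‖x‖ ∂stdGaussian (E n) := by
    rw [integral_pos_iff_support_of_nonneg (fun x ↦ norm_nonneg x) integrable_norm_stdGaussian,
      pos_iff_ne_zero]
    intro h0
    have h1 : ∀ᵐ x ∂stdGaussian (E n), x = 0 := by
      rw [ae_iff]
      convert h0 using 2
      ext x
      simp
    obtain ⟨x, hx, hx'⟩ := (h1.and ae_stdGaussian_ne_zero).exists
    exact hx' hx
  have he : ∫ x : E n, id ‖x‖ * ⟪v, ‖x‖⁻¹ • x⟫ ∂stdGaussian (E n) =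
      ∫ x : E n, ⟪v, x⟫ ∂stdGaussian (E n) := by
    refine integral_congr_ae ?_
    filter_upwards [ae_stdGaussian_ne_zero] with x hx
    rw [real_inner_smul_right, id, ← mul_assoc, mul_inv_cancel₀ (norm_ne_zero_iff.2 hx), one_mul]
  have h2 := h.2
  rw [he, (hasInt_inner_stdGaussian v).2] at h2
  simpa [hpos.ne'] using h2.symm

lemma integral_inner_sq_sphMeasure [NeZero n] (v : E n) :
    ∫ θ, ⟪v, θ⟫ ^ 2 ∂sphMeasure n = ‖v‖ ^ 2 / n := by
  have hc : Continuous fun θ : E n ↦ ⟪v, θ⟫ ^ 2 := by fun_prop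
  have h := HasInt.polar (A := fun r ↦ r ^ 2) (by fun_prop) hasInt_sq_norm_stdGaussian
    (integrable_sphMeasure hc).hasInt
  have he : ∫ x : E n, ‖x‖ ^ 2 * ⟪v, ‖x‖⁻¹ • x⟫ ^ 2 ∂stdGaussian (E n) =
      ∫ x : E n, ⟪v, x⟫ ^ 2 ∂stdGaussian (E n) := by
    refine integral_congr_ae ?_
    filter_upwards [ae_stdGaussian_ne_zero] with x hx
    rw [real_inner_smul_right, ← mul_pow, ← mul_assoc, mul_inv_cancel₀ (norm_ne_zero_iff.2 hx),
      one_mul]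
  have h2 := h.2
  rw [he, (hasInt_inner_sq_stdGaussian v).2] at h2
  rw [h2, mul_div_cancel_left₀]
  exact NeZero.ne _

/-- The sharp Poincaré inequality on the sphere. -/
theorem sphere_poincare [NeZero n] {w : E n → ℝ} (hw : ContDiff ℝ 1 w) :
    ((n : ℝ) - 1) * (∫ θ, w θ ^ 2 ∂sphMeasure n - (∫ θ, w θ ∂sphMeasure n) ^ 2) ≤
      ∫ θ, ‖sgrad w θ‖ ^ 2 ∂sphMeasure n := by
  have key : ∀ w : E n → ℝ, ContDiff ℝ 1 w → ∫ θ, w θ ∂sphMeasure n = 0 →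
      ((n : ℝ) - 1) * ∫ θ, w θ ^ 2 ∂sphMeasure n ≤ ∫ θ, ‖sgrad w θ‖ ^ 2 ∂sphMeasure n := by
    intro w hw h0
    obtain ⟨K, hK⟩ := lipschitzWith_radialExt hw (ρ := id) zero_le_one
      (fun r s _ _ ↦ by simp) rfl
    have hP := gaussian_poincare hK
    have hwI := (integrable_sphMeasure hw.continuous).hasInt
    have hw2I := (integrable_sphMeasure (w := fun θ ↦ w θ ^ 2) (hw.continuous.pow 2)).hasInt
    have hsI := (integrable_sphMeasure (w := fun θ ↦ ‖sgrad w θ‖ ^ 2)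
      ((continuous_sgrad hw).norm.pow 2)).hasInt
    have e1 : ∫ x, radialExt id w x ∂stdGaussian (E n) = 0 := by
      have := (HasInt.polar measurable_id (A := id) integrable_norm_stdGaussian.hasInt hwI).2
      rw [h0, mul_zero] at this
      exact this
    have e2 : ∫ x, radialExt id w x ^ 2 ∂stdGaussian (E n) =
        n * ∫ θ, w θ ^ 2 ∂sphMeasure n := by
      rw [← (HasInt.polar (A := fun r ↦ r ^ 2) (by fun_prop) hasInt_sq_norm_stdGaussian hw2I).2]
      simp only [radialExt, mul_pow, id]
    have e3 : ∫ x, ‖fderiv ℝ (radialExt id w) x‖ ^ 2 ∂stdGaussian (E n) =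
        ∫ θ, w θ ^ 2 ∂sphMeasure n + ∫ θ, ‖sgrad w θ‖ ^ 2 ∂sphMeasure n := by
      have hs := (HasInt.polar (A := fun _ ↦ 1) measurable_const (hasInt_const 1)
        (hw2I.add hsI)).2
      rw [one_mul] at hs
      refine Eq.trans (integral_congr_ae ?_) hs
      filter_upwards [ae_stdGaussian_ne_zero] with x hx
      rw [norm_fderiv_radialExt_sq hw hx (hasDerivAt_id _), id,
        div_self (norm_ne_zero_iff.2 hx)]
      simp
    rw [e1, e2, e3] at hP
    linarith
  set m := ∫ θ, w θ ∂sphMeasure n with hm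
  have hwI := (integrable_sphMeasure hw.continuous).hasInt
  have hw2I := (integrable_sphMeasure (w := fun θ ↦ w θ ^ 2) (hw.continuous.pow 2)).hasInt
  have h := key (fun θ ↦ w θ - m) (hw.sub contDiff_const) (by
    rw [(hwI.sub (hasInt_const m)).2, sub_self])
  have e1 : ∫ θ, (w θ - m) ^ 2 ∂sphMeasure n = ∫ θ, w θ ^ 2 ∂sphMeasure n - m ^ 2 := by
    have := ((hw2I.sub (hwI.const_mul (2 * m))).add (hasInt_const (m ^ 2))).2
    rw [← hm] at this
    calc _ = _ := integral_congr_ae (ae_of_all _ fun θ ↦ by ring)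
      _ = _ := this
      _ = _ := by ring
  have e2 : sgrad (fun θ ↦ w θ - m) = sgrad w := by
    ext θ : 1
    simp only [sgrad, gradient, fderiv_sub_const]
  rwa [e1, e2] at h

/-- Integration by parts on the sphere against linear functions. -/
theorem integral_inner_sgrad [NeZero n] {w : E n → ℝ} (hw : ContDiff ℝ 1 w) (v : E n) :
    ∫ θ, ⟪sgrad w θ, v⟫ ∂sphMeasure n = ((n : ℝ) - 1) * ∫ θ, w θ * ⟪v, θ⟫ ∂sphMeasure n := by
  have hl : ContDiff ℝ 1 fun x : E n ↦ ⟪v, x⟫ := (innerSL ℝ v).contDiff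
  have hg := continuous_sgrad hw
  have i1 := (integrable_sphMeasure hw.continuous).hasInt
  have i2 := (integrable_sphMeasure (w := fun θ ↦ w θ ^ 2) (hw.continuous.pow 2)).hasInt
  have i3 := (integrable_sphMeasure (w := fun θ ↦ ‖sgrad w θ‖ ^ 2) (hg.norm.pow 2)).hasInt
  have i4 := (integrable_sphMeasure (w := fun θ ↦ ⟪sgrad w θ, v⟫) (by fun_prop)).hasInt
  have i5 := (integrable_sphMeasure (w := fun θ ↦ w θ * ⟪v, θ⟫)
    (hw.continuous.mul (by fun_prop))).hasInt
  have i6 : HasInt (sphMeasure n) (fun θ ↦ ⟪v, θ⟫) 0 :=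
    ⟨integrable_sphMeasure (by fun_prop), integral_inner_sphMeasure v⟩
  have i7 : HasInt (sphMeasure n) (fun θ ↦ ⟪v, θ⟫ ^ 2) (‖v‖ ^ 2 / n) :=
    ⟨integrable_sphMeasure (by fun_prop), integral_inner_sq_sphMeasure v⟩
  set A := ∫ θ, w θ ∂sphMeasure n
  set B := ∫ θ, w θ ^ 2 ∂sphMeasure n
  set C := ∫ θ, ‖sgrad w θ‖ ^ 2 ∂sphMeasure n
  set D := ∫ θ, ⟪sgrad w θ, v⟫ ∂sphMeasure n
  set F := ∫ θ, w θ * ⟪v, θ⟫ ∂sphMeasure n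
  have hn : (n : ℝ) ≠ 0 := NeZero.ne _
  have key : ∀ t : ℝ, 0 ≤ (C - (n - 1) * (B - A ^ 2)) + t * (2 * (D - (n - 1) * F)) := by
    intro t
    have hP := sphere_poincare (w := fun x ↦ w x + t * ⟪v, x⟫)
      (hw.add (contDiff_const.mul hl))
    have e1 : ∫ θ, (w θ + t * ⟪v, θ⟫) ∂sphMeasure n = A := by
      rw [(i1.add (i6.const_mul t)).2]; ring
    have e2 : ∫ θ, (w θ + t * ⟪v, θ⟫) ^ 2 ∂sphMeasure n =
        B + 2 * t * F + t ^ 2 * (‖v‖ ^ 2 / n) := by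
      rw [← ((i2.add (i5.const_mul (2 * t))).add (i7.const_mul (t ^ 2))).2]
      refine integral_congr_ae (ae_of_all _ fun θ ↦ ?_)
      ring
    have e3 : ∫ θ, ‖sgrad (fun x ↦ w x + t * ⟪v, x⟫) θ‖ ^ 2 ∂sphMeasure n =
        C + 2 * t * D + t ^ 2 * (‖v‖ ^ 2 - ‖v‖ ^ 2 / n) := by
      rw [← ((i3.add (i4.const_mul (2 * t))).add
        (((hasInt_const (‖v‖ ^ 2)).sub i7).const_mul (t ^ 2))).2]
      refine integral_congr_ae ?_
      filter_upwards [ae_norm_eq_one] with θ hθ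
      have hgr : gradient (fun x ↦ w x + t * ⟪v, x⟫) θ = gradient w θ + t • v := by
        refine HasGradientAt.gradient ?_
        rw [hasGradientAt_iff_hasFDerivAt, map_add, map_smul]
        refine HasFDerivAt.add ?_ (HasFDerivAt.const_mul ?_ t)
        · exact ((hw.differentiable one_ne_zero θ).hasGradientAt).hasFDerivAt
        · exact (innerSL ℝ v).hasFDerivAt
      have hsg : sgrad (fun x ↦ w x + t * ⟪v, x⟫) θ = sgrad w θ + t • (v - ⟪v, θ⟫ • θ) := by
        simp only [sgrad, hgr, inner_add_left, real_inner_smul_left]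
        module
      rw [hsg, norm_add_sq_real, real_inner_smul_right, inner_sub_right, real_inner_smul_right,
        inner_sgrad_self w hθ, norm_smul, mul_pow, norm_sub_sq_real, norm_smul,
        real_inner_smul_right, hθ]
      simp only [Real.norm_eq_abs, mul_one, sq_abs, mul_zero, sub_zero]
      ring
    rw [e1, e2, e3] at hP
    have : t ^ 2 * (‖v‖ ^ 2 - ‖v‖ ^ 2 / n) = (n - 1) * (t ^ 2 * (‖v‖ ^ 2 / n)) := by
      field_simp
    linarith
  by_contra hne
  set p := C - (n - 1) * (B - A ^ 2)
  have hq : 2 * (D - (n - 1) * F) ≠ 0 := by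
    intro h
    exact hne (by linarith)
  have := key ((-1 - p) / (2 * (D - (n - 1) * F)))
  rw [div_mul_cancel₀ _ hq] at this
  linarith

end SphereInequalities

section SphereLogSobolev

open ProbabilityTheory Topology

/-- A smooth Lipschitz approximation of the indicator function of `(0, ∞)`. -/
def radialCutoff (ε r : ℝ) : ℝ := r ^ 2 / (r ^ 2 + ε)

lemma abs_radialCutoff_sub_le {ε r s : ℝ} (hε : 0 < ε) (hr : 0 ≤ r) (hs : 0 ≤ s) :
    |radialCutoff ε r - radialCutoff ε s| ≤ (1 + 1 / ε) * |r - s| := by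
  have h1 : 0 < r ^ 2 + ε := by positivity
  have h2 : 0 < s ^ 2 + ε := by positivity
  have e : radialCutoff ε r - radialCutoff ε s =
      (ε * (r + s) / ((r ^ 2 + ε) * (s ^ 2 + ε))) * (r - s) := by
    rw [radialCutoff, radialCutoff]
    field_simp
    ring
  rw [e, abs_mul]
  gcongr
  rw [abs_of_nonneg (by positivity), div_le_iff₀ (by positivity)]
  have h3 : r + s ≤ (1 + 1 / ε) * (r ^ 2 + s ^ 2 + ε) := by
    have : (1 + 1 / ε) * (r ^ 2 + s ^ 2 + ε) =
        r ^ 2 + s ^ 2 + ε + 1 + (r ^ 2 + s ^ 2) / ε := by field_simp; ring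
    rw [this]
    have : 0 ≤ (r ^ 2 + s ^ 2) / ε := by positivity
    nlinarith [sq_nonneg (r - 1), sq_nonneg (s - 1), sq_nonneg r, sq_nonneg s]
  calc ε * (r + s) ≤ ε * ((1 + 1 / ε) * (r ^ 2 + s ^ 2 + ε)) := by gcongr
    _ = (1 + 1 / ε) * (ε * (r ^ 2 + s ^ 2 + ε)) := by ring
    _ ≤ (1 + 1 / ε) * ((r ^ 2 + ε) * (s ^ 2 + ε)) := by
        refine mul_le_mul_of_nonneg_left ?_ (by positivity)
        nlinarith [mul_nonneg (sq_nonneg r) (sq_nonneg s)]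

lemma hasDerivAt_radialCutoff {ε r : ℝ} (hε : 0 < ε) :
    HasDerivAt (radialCutoff ε) (2 * r * ε / (r ^ 2 + ε) ^ 2) r := by
  have h1 : r ^ 2 + ε ≠ 0 := by positivity
  refine ((hasDerivAt_pow 2 r).div ((hasDerivAt_pow 2 r).add_const ε) h1).congr_deriv ?_
  field_simp
  ring

lemma radialCutoff_nonneg {ε : ℝ} (hε : 0 < ε) (r : ℝ) : 0 ≤ radialCutoff ε r := by
  unfold radialCutoff
  positivity

lemma radialCutoff_le_one {ε : ℝ} (hε : 0 < ε) (r : ℝ) : radialCutoff ε r ≤ 1 := by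
  unfold radialCutoff
  rw [div_le_one (by positivity)]
  linarith

/-- The logarithmic Sobolev inequality on the sphere. -/
theorem sphere_logSobolev (hn : 3 ≤ n) {u : E n → ℝ} (hu : ContDiff ℝ 1 u) :
    entExp (sphMeasure n) u ≤
      1 / (2 * ((n : ℝ) - 2)) * ∫ θ, Real.exp (u θ) * ‖sgrad u θ‖ ^ 2 ∂sphMeasure n := by
  have : NeZero n := ⟨by omega⟩
  have hn' : (3 : ℝ) ≤ n := by exact_mod_cast hn
  set γ := stdGaussian (E n)
  obtain ⟨M, -, hM0, -, hM, -⟩ := exists_bounds_of_contDiff hu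
  obtain ⟨S, hS⟩ := (isCompact_sphere (0 : E n) 1).exists_bound_of_continuousOn
    (continuous_sgrad hu).continuousOn
  replace hS : ∀ θ : E n, ‖θ‖ = 1 → ‖sgrad u θ‖ ≤ S := fun θ hθ ↦ hS θ (by simp [hθ])
  set ε : ℕ → ℝ := fun k ↦ 1 / ((k : ℝ) + 1) with hε
  have hεpos : ∀ k, 0 < ε k := fun k ↦ by simp only [hε]; positivity
  have hεlim : Tendsto ε atTop (𝓝 0) := tendsto_one_div_add_atTop_nhds_zero_nat
  set G : ℕ → E n → ℝ := fun k ↦ radialExt (radialCutoff (ε k)) u with hG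
  have hLip : ∀ k, ∃ K, LipschitzWith K (G k) := fun k ↦
    lipschitzWith_radialExt hu (by have := hεpos k; positivity)
      (fun r s hr hs ↦ abs_radialCutoff_sub_le (hεpos k) hr hs) (by simp [radialCutoff])
  have hGc : ∀ k, Continuous (G k) := fun k ↦ (hLip k).choose_spec.continuous
  have hρlim : ∀ r : ℝ, r ≠ 0 → Tendsto (fun k ↦ radialCutoff (ε k) r) atTop (𝓝 1) := by
    intro r hr
    have : Tendsto (fun k ↦ r ^ 2 / (r ^ 2 + ε k)) atTop (𝓝 (r ^ 2 / (r ^ 2 + 0))) :=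
      tendsto_const_nhds.div (tendsto_const_nhds.add hεlim) (by simpa using hr)
    rwa [add_zero, div_self (pow_ne_zero 2 hr)] at this
  have hGlim : ∀ x : E n, x ≠ 0 → Tendsto (fun k ↦ G k x) atTop (𝓝 (u (‖x‖⁻¹ • x))) := by
    intro x hx
    simpa [hG, radialExt] using
      (hρlim ‖x‖ (norm_ne_zero_iff.2 hx)).mul_const (u (‖x‖⁻¹ • x))
  have hGM : ∀ k (x : E n), x ≠ 0 → |G k x| ≤ M := by
    intro k x hx
    simp only [hG, radialExt]
    rw [abs_mul, abs_of_nonneg (radialCutoff_nonneg (hεpos k) _)]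
    calc _ ≤ 1 * M := by
          gcongr
          · exact radialCutoff_le_one (hεpos k) _
          · exact hM _ (norm_normalize hx)
      _ = M := one_mul M
  have hone : HasInt γ (fun x : E n ↦ (fun _ : ℝ ↦ (1 : ℝ)) ‖x‖) 1 := hasInt_const 1
  have huc := hu.continuous
  have hs := continuous_sgrad hu
  have l1 : Tendsto (fun k ↦ ∫ x, Real.exp (G k x) ∂γ) atTop
      (𝓝 (∫ θ, Real.exp (u θ) ∂sphMeasure n)) := by
    have e := (HasInt.polar measurable_const hone
      (integrable_sphMeasure (w := fun θ ↦ Real.exp (u θ)) (by fun_prop)).hasInt).2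
    rw [one_mul] at e
    simp only [one_mul] at e
    rw [← e]
    refine tendsto_integral_of_dominated_convergence (fun _ ↦ Real.exp M)
      (fun k ↦ (hGc k).rexp.aestronglyMeasurable) (integrable_const _) (fun k ↦ ?_) ?_
    · filter_upwards [ae_stdGaussian_ne_zero] with x hx
      rw [Real.norm_eq_abs, Real.abs_exp]
      exact Real.exp_le_exp.2 ((le_abs_self _).trans (hGM k x hx))
    · filter_upwards [ae_stdGaussian_ne_zero] with x hx
      exact (Real.continuous_exp.tendsto _).comp (hGlim x hx)
  have l2 : Tendsto (fun k ↦ ∫ x, Real.exp (G k x) * G k x ∂γ) atTop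
      (𝓝 (∫ θ, Real.exp (u θ) * u θ ∂sphMeasure n)) := by
    have e := (HasInt.polar measurable_const hone
      (integrable_sphMeasure (w := fun θ ↦ Real.exp (u θ) * u θ) (by fun_prop)).hasInt).2
    rw [one_mul] at e
    simp only [one_mul] at e
    rw [← e]
    refine tendsto_integral_of_dominated_convergence (fun _ ↦ Real.exp M * M)
      (fun k ↦ ((hGc k).rexp.mul (hGc k)).aestronglyMeasurable) (integrable_const _)
      (fun k ↦ ?_) ?_
    · filter_upwards [ae_stdGaussian_ne_zero] with x hx
      rw [Real.norm_eq_abs, abs_mul, Real.abs_exp]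
      have := hGM k x hx
      gcongr
      exact (le_abs_self _).trans this
    · filter_upwards [ae_stdGaussian_ne_zero] with x hx
      exact ((Real.continuous_exp.tendsto _).comp (hGlim x hx)).mul (hGlim x hx)
  have l3 : Tendsto (fun k ↦ ∫ x, Real.exp (G k x) * ‖fderiv ℝ (G k) x‖ ^ 2 ∂γ) atTop
      (𝓝 (1 / ((n : ℝ) - 2) * ∫ θ, Real.exp (u θ) * ‖sgrad u θ‖ ^ 2 ∂sphMeasure n)) := by
    have e := HasInt.polar (A := fun r ↦ (r ^ 2)⁻¹) (by fun_prop)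
      (hasInt_inv_sq_norm_stdGaussian hn)
      (integrable_sphMeasure (w := fun θ ↦ Real.exp (u θ) * ‖sgrad u θ‖ ^ 2)
        (by fun_prop)).hasInt
    have hder : ∀ k (x : E n), x ≠ 0 → ‖fderiv ℝ (G k) x‖ ^ 2 =
        (2 * ‖x‖ * ε k / (‖x‖ ^ 2 + ε k) ^ 2) ^ 2 * u (‖x‖⁻¹ • x) ^ 2 +
        (radialCutoff (ε k) ‖x‖ / ‖x‖) ^ 2 * ‖sgrad u (‖x‖⁻¹ • x)‖ ^ 2 := fun k x hx ↦
      norm_fderiv_radialExt_sq hu hx (hasDerivAt_radialCutoff (hεpos k))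
    rw [← e.2]
    refine tendsto_integral_of_dominated_convergence
      (fun x ↦ Real.exp M * (M ^ 2 + S ^ 2) * (‖x‖ ^ 2)⁻¹)
      (fun k ↦ ((hGc k).rexp.measurable.mul
        ((measurable_fderiv ℝ (G k)).norm.pow_const 2)).aestronglyMeasurable)
      ((hasInt_inv_sq_norm_stdGaussian hn).1.const_mul _) (fun k ↦ ?_) ?_
    · filter_upwards [ae_stdGaussian_ne_zero] with x hx
      have hx0 : 0 < ‖x‖ := norm_pos_iff.2 hx
      have hε0 := hεpos k
      rw [Real.norm_eq_abs, abs_of_nonneg (by positivity), hder k x hx]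
      have b1 : (2 * ‖x‖ * ε k / (‖x‖ ^ 2 + ε k) ^ 2) ^ 2 ≤ (‖x‖ ^ 2)⁻¹ := by
        rw [← inv_pow]
        gcongr
        rw [div_le_iff₀ (by positivity), inv_mul_eq_div, le_div_iff₀ hx0]
        nlinarith [sq_nonneg (‖x‖ ^ 2 - ε k), sq_nonneg (‖x‖ ^ 2 + ε k)]
      have b2 : (radialCutoff (ε k) ‖x‖ / ‖x‖) ^ 2 ≤ (‖x‖ ^ 2)⁻¹ := by
        rw [← inv_pow, inv_eq_one_div]
        have := radialCutoff_nonneg hε0 ‖x‖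
        gcongr
        exact radialCutoff_le_one hε0 _
      have b3 : u (‖x‖⁻¹ • x) ^ 2 ≤ M ^ 2 := sq_le_sq' (abs_le.1 (hM _ (norm_normalize hx))).1
        (abs_le.1 (hM _ (norm_normalize hx))).2
      have b4 : ‖sgrad u (‖x‖⁻¹ • x)‖ ^ 2 ≤ S ^ 2 := by
        gcongr
        exact hS _ (norm_normalize hx)
      calc _ ≤ Real.exp M * ((‖x‖ ^ 2)⁻¹ * M ^ 2 + (‖x‖ ^ 2)⁻¹ * S ^ 2) := by
            gcongr
            exact (le_abs_self _).trans (hGM k x hx)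
        _ = _ := by ring
    · filter_upwards [ae_stdGaussian_ne_zero] with x hx
      have hx0 : ‖x‖ ≠ 0 := norm_ne_zero_iff.2 hx
      simp only [hder _ x hx]
      have t1 : Tendsto (fun k ↦ 2 * ‖x‖ * ε k / (‖x‖ ^ 2 + ε k) ^ 2) atTop (𝓝 0) := by
        have : Tendsto (fun k ↦ 2 * ‖x‖ * ε k / (‖x‖ ^ 2 + ε k) ^ 2) atTop
            (𝓝 (2 * ‖x‖ * 0 / (‖x‖ ^ 2 + 0) ^ 2)) :=
          (tendsto_const_nhds.mul hεlim).div ((tendsto_const_nhds.add hεlim).pow 2)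
            (by simpa using hx)
        simpa using this
      have t2 := ((Real.continuous_exp.tendsto _).comp (hGlim x hx)).mul
        (((t1.pow 2).mul_const (u (‖x‖⁻¹ • x) ^ 2)).add
          ((((hρlim _ hx0).div_const ‖x‖).pow 2).mul_const (‖sgrad u (‖x‖⁻¹ • x)‖ ^ 2)))
      refine t2.mono_right (le_of_eq ?_)
      rw [one_div, inv_pow]
      congr 1
      ring
  have hpos : 0 < ∫ θ, Real.exp (u θ) ∂sphMeasure n :=
    integral_exp_pos (integrable_sphMeasure (w := fun θ ↦ Real.exp (u θ)) (by fun_prop))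
  have lL : Tendsto (fun k ↦ entExp γ (G k)) atTop (𝓝 (entExp (sphMeasure n) u)) :=
    l2.sub (l1.mul (l1.log hpos.ne'))
  have lR := l3.const_mul (1 / 2)
  have hfin := le_of_tendsto_of_tendsto' lL lR fun k ↦ gaussian_logSobolev (hLip k).choose_spec
  refine hfin.trans_eq ?_
  have : (n : ℝ) - 2 ≠ 0 := by linarith
  field_simp

end SphereLogSobolev

section ExponentialMoments

open ProbabilityTheory Topology

lemma le_mul_of_mul_deriv_sub_nonpos {M M' : ℝ → ℝ} {T : ℝ} (h0 : M 0 = 0)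
    (hM : ∀ t, HasDerivAt M (M' t) t) (h : ∀ t, 0 < t → t < T → t * M' t - M t ≤ 0) (hT : 0 < T) :
    M T ≤ T * M' 0 := by
  have hanti : AntitoneOn (fun t ↦ t⁻¹ * M t) (Set.Ioc 0 T) := by
    have hd : ∀ t, t ≠ 0 → HasDerivAt (fun t ↦ t⁻¹ * M t) (-(t ^ 2)⁻¹ * M t + t⁻¹ * M' t) t :=
      fun t ht ↦ (hasDerivAt_inv ht).mul (hM t)
    refine antitoneOn_of_hasDerivWithinAt_nonpos (convex_Ioc 0 T)
      (f' := fun t ↦ -(t ^ 2)⁻¹ * M t + t⁻¹ * M' t)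
      (fun t ht ↦ (hd t ht.1.ne').continuousAt.continuousWithinAt) (fun t ht ↦ ?_) fun t ht ↦ ?_
    · rw [interior_Ioc] at ht
      exact (hd t ht.1.ne').hasDerivWithinAt
    · rw [interior_Ioc] at ht
      have e : -(t ^ 2)⁻¹ * M t + t⁻¹ * M' t = (t ^ 2)⁻¹ * (t * M' t - M t) := by
        have := ht.1.ne'
        field_simp
        ring
      rw [e]
      exact mul_nonpos_of_nonneg_of_nonpos (by positivity) (h t ht.1 ht.2)
  have hlim : Tendsto (fun t ↦ t⁻¹ * M t) (𝓝[>] 0) (𝓝 (M' 0)) := by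
    have := (hM 0).tendsto_slope_zero_right
    simpa [h0] using this
  have hle : T⁻¹ * M T ≤ M' 0 := by
    refine ge_of_tendsto hlim ?_
    filter_upwards [Ioc_mem_nhdsGT hT] with t ht
    exact hanti ht ⟨hT, le_rfl⟩ ht.2
  rwa [inv_mul_le_iff₀ hT] at hle

lemma entExp_const_mul (q : E n → ℝ) (t : ℝ) : entExp (sphMeasure n) (fun θ ↦ t * q θ) =
    t * (∫ θ, q θ * Real.exp (t * q θ) ∂sphMeasure n) -
      (∫ θ, Real.exp (t * q θ) ∂sphMeasure n) * cgf q (sphMeasure n) t := by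
  rw [entExp, ← integral_const_mul]
  congr 1
  exact integral_congr_ae (ae_of_all _ fun θ ↦ by ring)

lemma sgrad_const_mul {q : E n → ℝ} (hq : ContDiff ℝ 1 q) (s : ℝ) (θ : E n) :
    sgrad (fun θ ↦ s * q θ) θ = s • sgrad q θ := by
  have hgr : gradient (fun θ ↦ s * q θ) θ = s • gradient q θ := by
    refine HasGradientAt.gradient ?_
    rw [hasGradientAt_iff_hasFDerivAt, map_smul]
    exact (((hq.differentiable one_ne_zero θ).hasGradientAt).hasFDerivAt).const_mul s
  simp only [sgrad, hgr, real_inner_smul_left]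
  module

variable [NeZero n] {q u g : E n → ℝ}

lemma integrable_exp_sphMeasure (hu : Continuous u) :
    Integrable (fun θ ↦ Real.exp (u θ)) (sphMeasure n) :=
  integrable_sphMeasure (by fun_prop)

lemma hasDerivAt_cgf_sphMeasure (hq : Continuous q) (t : ℝ) :
    HasDerivAt (cgf q (sphMeasure n)) ((∫ θ, q θ * Real.exp (t * q θ) ∂sphMeasure n) /
      ∫ θ, Real.exp (t * q θ) ∂sphMeasure n) t := by
  have hset : integrableExpSet q (sphMeasure n) = Set.univ :=
    Set.eq_univ_of_forall fun t ↦ integrable_exp_sphMeasure (by fun_prop)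
  have h := hasDerivAt_mgf (X := q) (μ := sphMeasure n) (t := t) (by simp [hset])
  exact h.log (integral_exp_pos (integrable_exp_sphMeasure (by fun_prop))).ne'

/-- The Gibbs variational principle. -/
lemma integral_exp_mul_le_entExp_add (hu : Continuous u) (hg : Continuous g) :
    ∫ θ, g θ * Real.exp (u θ) ∂sphMeasure n ≤ entExp (sphMeasure n) u +
      (∫ θ, Real.exp (u θ) ∂sphMeasure n) *
        Real.log (∫ θ, Real.exp (g θ) ∂sphMeasure n) := by
  have iu := (integrable_exp_sphMeasure hu).hasInt
  have ig := (integrable_exp_sphMeasure hg).hasInt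
  have hZ := integral_exp_pos iu.1
  have hY := integral_exp_pos ig.1
  have iuu := (integrable_sphMeasure (w := fun θ ↦ Real.exp (u θ) * u θ) (by fun_prop)).hasInt
  have igu := (integrable_sphMeasure (w := fun θ ↦ g θ * Real.exp (u θ)) (by fun_prop)).hasInt
  unfold entExp
  set Z := ∫ θ, Real.exp (u θ) ∂sphMeasure n
  set Y := ∫ θ, Real.exp (g θ) ∂sphMeasure n
  have hle := ((iu.const_mul Z⁻¹).sub (ig.const_mul Y⁻¹)).mono
    (((iuu.sub igu).add (iu.const_mul (Real.log Y - Real.log Z))).const_mul Z⁻¹) fun θ ↦ by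
      refine (sub_le_mul_log_sub_log (by positivity) (by positivity)).trans_eq ?_
      rw [Real.log_mul (by positivity) (by positivity), Real.log_mul (by positivity)
        (by positivity), Real.log_inv, Real.log_inv, Real.log_exp, Real.log_exp]
      ring
  rw [inv_mul_cancel₀ hZ.ne', inv_mul_cancel₀ hY.ne', sub_self] at hle
  have := nonneg_of_mul_nonneg_right hle (inv_pos.2 hZ)
  linarith

/-- Exponential moments of a nonnegative function whose square root is Lipschitz. -/
lemma cgf_le_of_sgrad_sq_le (hn : 3 ≤ n) (hq : ContDiff ℝ 1 q)
    (h : ∀ θ, ‖θ‖ = 1 → ‖sgrad q θ‖ ^ 2 ≤ 4 * q θ) {t : ℝ} (ht : 0 < t)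
    (ht' : 2 / ((n : ℝ) - 2) * t < 1) :
    cgf q (sphMeasure n) t ≤
      t * (∫ θ, q θ ∂sphMeasure n) / (1 - 2 / ((n : ℝ) - 2) * t) := by
  have hn' : (3 : ℝ) ≤ n := by exact_mod_cast hn
  have hn2 : (0 : ℝ) < n - 2 := by linarith
  set c : ℝ := 2 / ((n : ℝ) - 2) with hc
  have hc0 : 0 < c := by positivity
  have hqc := hq.continuous
  set I : ℝ → ℝ := fun t ↦ ∫ θ, q θ * Real.exp (t * q θ) ∂sphMeasure n
  set Z : ℝ → ℝ := fun t ↦ ∫ θ, Real.exp (t * q θ) ∂sphMeasure n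
  set L := cgf q (sphMeasure n)
  have hZ : ∀ t, 0 < Z t := fun t ↦ integral_exp_pos (integrable_exp_sphMeasure (by fun_prop))
  have hL : ∀ t, HasDerivAt L (I t / Z t) t := hasDerivAt_cgf_sphMeasure hqc
  have hM : ∀ t, HasDerivAt (fun t ↦ L t * (1 - c * t))
      (I t / Z t * (1 - c * t) + L t * (-c)) t := fun t ↦ by
    refine (hL t).mul ?_
    simpa using ((hasDerivAt_id t).const_mul c).const_sub 1
  have hmain : ∀ s, 0 < s → s < t →
      s * (I s / Z s * (1 - c * s) + L s * (-c)) - L s * (1 - c * s) ≤ 0 := by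
    intro s hs _
    have hls := sphere_logSobolev hn (u := fun θ ↦ s * q θ) (contDiff_const.mul hq)
    rw [entExp_const_mul] at hls
    have hsg : ∀ θ, sgrad (fun θ ↦ s * q θ) θ = s • sgrad q θ := sgrad_const_mul hq s
    have hle : ∫ θ, Real.exp (s * q θ) * ‖sgrad (fun θ ↦ s * q θ) θ‖ ^ 2 ∂sphMeasure n ≤
        4 * s ^ 2 * I s := by
      rw [← integral_const_mul]
      simp only [hsg]
      have := continuous_sgrad hq
      refine integral_mono_ae (integrable_sphMeasure (by fun_prop))
        (integrable_sphMeasure (by fun_prop)) ?_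
      filter_upwards [ae_norm_eq_one] with θ hθ
      rw [norm_smul, mul_pow, Real.norm_eq_abs, sq_abs]
      have := mul_le_mul_of_nonneg_left (h θ hθ)
        (by positivity : 0 ≤ Real.exp (s * q θ) * s ^ 2)
      linarith
    have h1 : s * I s - Z s * L s ≤ c * s ^ 2 * I s := by
      refine hls.trans ((mul_le_mul_of_nonneg_left hle (by positivity)).trans_eq ?_)
      rw [hc]
      field_simp
      ring
    have e : s * (I s / Z s * (1 - c * s) + L s * (-c)) - L s * (1 - c * s) =
        (Z s)⁻¹ * ((s * I s - Z s * L s) - c * s ^ 2 * I s) := by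
      have := (hZ s).ne'
      field_simp
      ring
    rw [e]
    exact mul_nonpos_of_nonneg_of_nonpos (inv_pos.2 (hZ s)).le (by linarith)
  have := le_mul_of_mul_deriv_sub_nonpos (M := fun t ↦ L t * (1 - c * t)) (by simp [L])
    hM hmain ht
  rw [le_div_iff₀ (by linarith)]
  refine this.trans_eq ?_
  simp [L, I, Z]

/-- Exponential moments of a function with bounded second derivative. -/
lemma cgf_le_of_sgrad_gradient_sq_le (hn : 3 ≤ n) {F : E n → ℝ} (hF : ContDiff ℝ 1 F)
    (hq : ContDiff ℝ 1 fun θ ↦ ‖gradient F θ‖ ^ 2)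
    (h : ∀ θ, ‖θ‖ = 1 → ‖sgrad (fun θ ↦ ‖gradient F θ‖ ^ 2) θ‖ ^ 2 ≤ 4 * ‖gradient F θ‖ ^ 2)
    {v s : ℝ} (hv : v = 1 / ((n : ℝ) - 2)) (hs : 0 < s) (hs' : 2 * (v * s) ^ 2 < 1) :
    cgf F (sphMeasure n) s ≤ s * ∫ θ, F θ ∂sphMeasure n +
      s ^ 2 * (v * (∫ θ, ‖gradient F θ‖ ^ 2 ∂sphMeasure n) / (1 - 2 * (v * s) ^ 2)) := by
  have hn' : (3 : ℝ) ≤ n := by exact_mod_cast hn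
  have hn2 : (0 : ℝ) < n - 2 := by linarith
  have hv0 : 0 < v := by rw [hv]; positivity
  set q : E n → ℝ := fun θ ↦ ‖gradient F θ‖ ^ 2 with hqd
  set Q := ∫ θ, q θ ∂sphMeasure n with hQ
  have hQ0 : 0 ≤ Q := integral_nonneg fun θ ↦ by positivity
  have hFc := hF.continuous
  have hqc := hq.continuous
  set I : ℝ → ℝ := fun t ↦ ∫ θ, F θ * Real.exp (t * F θ) ∂sphMeasure n
  set Z : ℝ → ℝ := fun t ↦ ∫ θ, Real.exp (t * F θ) ∂sphMeasure n
  set L := cgf F (sphMeasure n)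
  have hZ : ∀ t, 0 < Z t := fun t ↦ integral_exp_pos (integrable_exp_sphMeasure (by fun_prop))
  have hL : ∀ t, HasDerivAt L (I t / Z t) t := hasDerivAt_cgf_sphMeasure hFc
  set B := v * Q / (1 - 2 * (v * s) ^ 2) with hB
  have hM : ∀ t, HasDerivAt (fun t ↦ L t - B * t ^ 2) (I t / Z t - B * (2 * t)) t := fun t ↦ by
    refine (hL t).sub ?_
    simpa using (hasDerivAt_pow 2 t).const_mul B
  have hmain : ∀ t, 0 < t → t < s →
      t * (I t / Z t - B * (2 * t)) - (L t - B * t ^ 2) ≤ 0 := by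
    intro t ht hts
    have hls := sphere_logSobolev hn (u := fun θ ↦ t * F θ) (contDiff_const.mul hF)
    have hsg : ∀ θ, sgrad (fun θ ↦ t * F θ) θ = t • sgrad F θ := sgrad_const_mul hF t
    have hle : ∫ θ, Real.exp (t * F θ) * ‖sgrad (fun θ ↦ t * F θ) θ‖ ^ 2 ∂sphMeasure n ≤
        t ^ 2 * ∫ θ, q θ * Real.exp (t * F θ) ∂sphMeasure n := by
      rw [← integral_const_mul]
      simp only [hsg]
      have := continuous_sgrad hF
      refine integral_mono_ae (integrable_sphMeasure (by fun_prop))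
        (integrable_sphMeasure (by fun_prop)) ?_
      filter_upwards [ae_norm_eq_one] with θ hθ
      rw [norm_smul, mul_pow, Real.norm_eq_abs, sq_abs, norm_sgrad_sq F hθ]
      have := mul_nonneg (by positivity : 0 ≤ Real.exp (t * F θ) * t ^ 2)
        (sq_nonneg ⟪gradient F θ, θ⟫)
      simp only [hqd]
      linarith
    have hgibbs := integral_exp_mul_le_entExp_add (u := fun θ ↦ t * F θ)
      (g := fun θ ↦ (v * t ^ 2) * q θ) (by fun_prop) (by fun_prop)
    have hvt : 2 * (v * t) ^ 2 ≤ 2 * (v * s) ^ 2 := by gcongr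
    have hcgf := cgf_le_of_sgrad_sq_le hn hq h (t := v * t ^ 2) (by positivity) (by
      have : 2 / ((n : ℝ) - 2) * (v * t ^ 2) = 2 * (v * t) ^ 2 := by rw [hv]; ring
      rw [this]; linarith)
    have e1 : 2 / ((n : ℝ) - 2) * (v * t ^ 2) = 2 * (v * t) ^ 2 := by rw [hv]; ring
    have e2 : Real.log (∫ θ, Real.exp (v * t ^ 2 * q θ) ∂sphMeasure n) ≤ B * t ^ 2 := by
      refine hcgf.trans ?_
      rw [e1, ← hQ, hB, div_mul_eq_mul_div]
      refine div_le_div₀ (by positivity) (le_of_eq (by ring)) (by linarith) (by linarith)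
    have e3 : ∫ θ, v * t ^ 2 * q θ * Real.exp (t * F θ) ∂sphMeasure n =
        v * t ^ 2 * ∫ θ, q θ * Real.exp (t * F θ) ∂sphMeasure n := by
      rw [← integral_const_mul]
      exact integral_congr_ae (ae_of_all _ fun θ ↦ by ring)
    rw [e3] at hgibbs
    have e4 : 1 / (2 * ((n : ℝ) - 2)) = v / 2 := by rw [hv]; field_simp
    rw [e4] at hls
    have h1 : entExp (sphMeasure n) (fun θ ↦ t * F θ) ≤ Z t * (B * t ^ 2) := by
      have h2 := mul_le_mul_of_nonneg_left hle (by positivity : 0 ≤ v / 2)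
      have h3 := mul_le_mul_of_nonneg_left e2 (hZ t).le
      linarith
    rw [entExp_const_mul] at h1
    have e : t * (I t / Z t - B * (2 * t)) - (L t - B * t ^ 2) =
        (Z t)⁻¹ * ((t * I t - Z t * L t) - Z t * (B * t ^ 2)) := by
      have := (hZ t).ne'
      field_simp
      ring
    rw [e]
    exact mul_nonpos_of_nonneg_of_nonpos (inv_pos.2 (hZ t)).le (by linarith)
  have := le_mul_of_mul_deriv_sub_nonpos (M := fun t ↦ L t - B * t ^ 2) (by simp [L])
    hM hmain hs
  have e0 : I 0 / Z 0 - B * (2 * 0) = ∫ θ, F θ ∂sphMeasure n := by simp [I, Z]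
  rw [e0] at this
  linarith

end ExponentialMoments

section GradientSecondMoment

variable {F : E n → ℝ}

lemma contDiff_gradient (hF : ContDiff ℝ 2 F) : ContDiff ℝ 1 (gradient F) :=
  (InnerProductSpace.toDual ℝ (E n)).symm.contDiff.comp
    (hF.fderiv_right (m := 1) (by norm_num))

lemma inner_gradient (w : E n → ℝ) (θ h : E n) : ⟪gradient w θ, h⟫ = fderiv ℝ w θ h := by
  rw [← toDual_gradient, InnerProductSpace.toDual_apply_apply]

lemma contDiff_gradient_apply (hF : ContDiff ℝ 2 F) (i : Fin n) :
    ContDiff ℝ 1 fun x ↦ gradient F x i :=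
  (EuclideanSpace.proj (𝕜 := ℝ) i : E n →L[ℝ] ℝ).contDiff.comp (contDiff_gradient hF)

lemma hasFDerivAt_gradient (hF : ContDiff ℝ 2 F) (x : E n) :
    HasFDerivAt (gradient F) (hess F x) x :=
  ((contDiff_gradient hF).differentiable one_ne_zero x).hasFDerivAt

lemma gradient_gradient_apply (hF : ContDiff ℝ 2 F) (θ : E n) (i j : Fin n) :
    gradient (fun x ↦ gradient F x i) θ j = hess F θ (EuclideanSpace.single j 1) i := by
  have h : HasFDerivAt (fun x ↦ gradient F x i)
      ((EuclideanSpace.proj (𝕜 := ℝ) i : E n →L[ℝ] ℝ).comp (hess F θ)) θ :=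
    (EuclideanSpace.proj (𝕜 := ℝ) i : E n →L[ℝ] ℝ).hasFDerivAt.comp θ (hasFDerivAt_gradient hF θ)
  have h2 := inner_gradient (fun x ↦ gradient F x i) θ (EuclideanSpace.single j 1)
  rw [h.fderiv, EuclideanSpace.inner_single_right] at h2
  simpa using h2

lemma sum_norm_gradient_gradient_sq (hF : ContDiff ℝ 2 F) (θ : E n) :
    ∑ i, ‖gradient (fun x ↦ gradient F x i) θ‖ ^ 2 = hsNormSq (hess F θ) := by
  simp only [EuclideanSpace.real_norm_sq_eq, gradient_gradient_apply hF, hsNormSq]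
  exact Finset.sum_comm

lemma gradient_variance_le [NeZero n] (hF : ContDiff ℝ 2 F) :
    ((n : ℝ) - 1) * (∫ θ, ‖gradient F θ‖ ^ 2 ∂sphMeasure n -
      ‖∫ θ, gradient F θ ∂sphMeasure n‖ ^ 2) ≤ ∫ θ, hsNormSq (hess F θ) ∂sphMeasure n := by
  have hg := (contDiff_gradient hF).continuous
  have hgi := integrable_sphMeasure hg
  have hi : ∀ i, Continuous fun x ↦ gradient F x i := fun i ↦
    (contDiff_gradient_apply hF i).continuous
  have e1 : ∫ θ, ‖gradient F θ‖ ^ 2 ∂sphMeasure n =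
      ∑ i, ∫ θ, (gradient F θ i) ^ 2 ∂sphMeasure n := by
    simp only [EuclideanSpace.real_norm_sq_eq]
    exact integral_finsetSum _ fun i _ ↦ integrable_sphMeasure ((hi i).pow 2)
  have e2 : ‖∫ θ, gradient F θ ∂sphMeasure n‖ ^ 2 =
      ∑ i, (∫ θ, gradient F θ i ∂sphMeasure n) ^ 2 := by
    rw [EuclideanSpace.real_norm_sq_eq]
    refine Finset.sum_congr rfl fun i _ ↦ ?_
    congr 1
    exact ((EuclideanSpace.proj (𝕜 := ℝ) i : E n →L[ℝ] ℝ).integral_comp_comm hgi).symm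
  have e3 : ∫ θ, hsNormSq (hess F θ) ∂sphMeasure n =
      ∑ i, ∫ θ, ‖gradient (fun x ↦ gradient F x i) θ‖ ^ 2 ∂sphMeasure n := by
    simp only [← sum_norm_gradient_gradient_sq hF]
    exact integral_finsetSum _ fun i _ ↦ integrable_sphMeasure
      ((continuous_gradient (contDiff_gradient_apply hF i)).norm.pow 2)
  rw [e1, e2, e3, ← Finset.sum_sub_distrib, Finset.mul_sum]
  refine Finset.sum_le_sum fun i _ ↦ (sphere_poincare (contDiff_gradient_apply hF i)).trans ?_
  have hc := contDiff_gradient_apply hF i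
  refine integral_mono_ae (integrable_sphMeasure ((continuous_sgrad hc).norm.pow 2))
    (integrable_sphMeasure ((continuous_gradient hc).norm.pow 2)) ?_
  filter_upwards [ae_norm_eq_one] with θ hθ
  rw [norm_sgrad_sq _ hθ]
  linarith [sq_nonneg ⟪gradient (fun x ↦ gradient F x i) θ, θ⟫]

/-- The second moment of the gradient in terms of the linear part and of the second derivative. -/
theorem integral_norm_gradient_sq_le (hn : 2 ≤ n) (hF : ContDiff ℝ 2 F) {ε : ℝ} (hε : 0 < ε) :
    ∫ θ, ‖gradient F θ‖ ^ 2 ∂sphMeasure n ≤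
      (1 + ε) * (n ^ 2 * ‖∫ θ, F θ • θ ∂sphMeasure n‖ ^ 2) +
      ((1 + 1 / ε) * (n / ((n : ℝ) - 1) ^ 3) + 1 / ((n : ℝ) - 1)) *
        ∫ θ, hsNormSq (hess F θ) ∂sphMeasure n := by
  have : NeZero n := ⟨by omega⟩
  have hn' : (2 : ℝ) ≤ n := by exact_mod_cast hn
  have hn0 : (0 : ℝ) < n := by linarith
  have hn1 : (0 : ℝ) < n - 1 := by linarith
  have hF1 : ContDiff ℝ 1 F := hF.of_le (by norm_num)
  have hFc := hF.continuous
  have hvar := gradient_variance_le hF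
  have hg := (contDiff_gradient hF).continuous
  set m := ∫ θ, gradient F θ ∂sphMeasure n with hm
  set Q := ∫ θ, ‖gradient F θ‖ ^ 2 ∂sphMeasure n with hQ
  set H := ∫ θ, hsNormSq (hess F θ) ∂sphMeasure n
  set c := ∫ θ, F θ • θ ∂sphMeasure n with hc
  set V := Q - ‖m‖ ^ 2 with hV
  have iQ : HasInt (sphMeasure n) (fun θ ↦ ‖gradient F θ‖ ^ 2) Q :=
    (integrable_sphMeasure (hg.norm.pow 2)).hasInt
  have im : HasInt (sphMeasure n) (fun θ ↦ ⟪m, gradient F θ⟫) (‖m‖ ^ 2) := by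
    refine ⟨integrable_sphMeasure (by fun_prop), ?_⟩
    rw [← real_inner_self_eq_norm_sq]
    exact (innerSL ℝ m).integral_comp_comm (integrable_sphMeasure hg)
  have iV : HasInt (sphMeasure n) (fun θ ↦ ‖gradient F θ - m‖ ^ 2) V := by
    have h := (iQ.sub (im.const_mul 2)).add (hasInt_const (‖m‖ ^ 2))
    have e : (fun θ ↦ ‖gradient F θ - m‖ ^ 2) =
        fun θ ↦ ‖gradient F θ‖ ^ 2 - 2 * ⟪m, gradient F θ⟫ + ‖m‖ ^ 2 := by
      ext θ
      rw [norm_sub_sq_real, real_inner_comm]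
    rw [e, hV]
    convert h using 1
    ring
  have im2 : HasInt (sphMeasure n) (fun θ ↦ ⟪m, θ⟫ ^ 2) (‖m‖ ^ 2 / n) :=
    ⟨integrable_sphMeasure (by fun_prop), integral_inner_sq_sphMeasure m⟩
  have iX := (integrable_sphMeasure
    (w := fun θ : E n ↦ ⟪gradient F θ - m, θ⟫ * ⟪m, θ⟫) (by fun_prop)).hasInt
  set X := ∫ θ, ⟪gradient F θ - m, θ⟫ * ⟪m, θ⟫ ∂sphMeasure n
  have hV0 : 0 ≤ V := (hasInt_const 0).mono iV fun θ ↦ by positivity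
  have hXsq : X ^ 2 ≤ V * (‖m‖ ^ 2 / n) := by
    have hquad : ∀ t : ℝ, 0 ≤ V * (t * t) + 2 * X * t + ‖m‖ ^ 2 / n := by
      intro t
      have := (hasInt_const 0).mono_ae
        (((iV.const_mul (t ^ 2)).add (iX.const_mul (2 * t))).add im2) (by
          filter_upwards [ae_norm_eq_one] with θ hθ
          have h1 := abs_real_inner_le_norm (gradient F θ - m) θ
          rw [hθ, mul_one] at h1
          have h2 : ⟪gradient F θ - m, θ⟫ ^ 2 ≤ ‖gradient F θ - m‖ ^ 2 := by
            rw [← sq_abs]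
            gcongr
          nlinarith [sq_nonneg (t * ⟪gradient F θ - m, θ⟫ + ⟪m, θ⟫), sq_nonneg t])
      linarith
    have := discrim_le_zero hquad
    rw [discrim] at this
    linarith
  have hibp : ‖m‖ ^ 2 - ‖m‖ ^ 2 / n - X = ((n : ℝ) - 1) * ⟪m, c⟫ := by
    have h1 := integral_inner_sgrad hF1 m
    have h2 : ∫ θ, F θ * ⟪m, θ⟫ ∂sphMeasure n = ⟪m, c⟫ := by
      have := (innerSL ℝ m).integral_comp_comm
        (integrable_sphMeasure (w := fun θ : E n ↦ F θ • θ) (by fun_prop))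
      rw [hc, ← innerSL_apply_apply ℝ m, ← this]
      exact integral_congr_ae (ae_of_all _ fun θ ↦ by simp)
    have h3 : ∫ θ, ⟪sgrad F θ, m⟫ ∂sphMeasure n = ‖m‖ ^ 2 - ‖m‖ ^ 2 / n - X := by
      rw [← ((im.sub im2).sub iX).2]
      refine integral_congr_ae (ae_of_all _ fun θ ↦ ?_)
      simp only [sgrad, inner_sub_left, real_inner_smul_left]
      rw [real_inner_comm m (gradient F θ), real_inner_comm m θ]
      ring
    rw [← h3, h1, h2]
  set C := ‖c‖
  set M := ‖m‖
  have hM0 : 0 ≤ M := norm_nonneg _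
  have hC0 : 0 ≤ C := norm_nonneg _
  set s := √(V / n)
  have hs0 : 0 ≤ s := Real.sqrt_nonneg _
  have hs2 : s ^ 2 = V / n := Real.sq_sqrt (by positivity)
  have hXle : X ≤ s * M := by
    refine (le_abs_self X).trans (abs_le_of_sq_le_sq ?_ (by positivity))
    rw [mul_pow, hs2]
    exact hXsq.trans_eq (by ring)
  have hmc : ⟪m, c⟫ ≤ M * C := real_inner_le_norm m c
  have hMle : M ≤ n * C + n / (n - 1) * s := by
    rcases hM0.eq_or_lt with h | h
    · rw [← h]
      positivity
    · have h1 : M ^ 2 * (n - 1) ≤ n * ((n - 1) * (M * C) + s * M) := by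
        have h2 : ((n : ℝ) - 1) * ⟪m, c⟫ ≤ (n - 1) * (M * C) := by gcongr
        have h3 : M ^ 2 - M ^ 2 / n ≤ (n - 1) * (M * C) + s * M := by linarith
        have h4 : M ^ 2 - M ^ 2 / n = M ^ 2 * (n - 1) / n := by field_simp
        rw [h4, div_le_iff₀ hn0] at h3
        linarith
      have h5 : M * (n - 1) ≤ n * ((n - 1) * C + s) := by
        refine le_of_mul_le_mul_left ?_ h
        linarith
      have h6 : n * C + n / (n - 1) * s = n * ((n - 1) * C + s) / (n - 1) := by field_simp
      rw [h6, le_div_iff₀ hn1]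
      exact h5
  have hM2 : M ^ 2 ≤ (1 + ε) * (n ^ 2 * C ^ 2) + (1 + 1 / ε) * ((n / (n - 1) * s) ^ 2) := by
    have h1 : M ^ 2 ≤ (n * C + n / (n - 1) * s) ^ 2 := by gcongr
    refine h1.trans ?_
    have h2 : (1 + ε) * ((n : ℝ) ^ 2 * C ^ 2) + (1 + 1 / ε) * ((n / (n - 1) * s) ^ 2) -
        (n * C + n / (n - 1) * s) ^ 2 = (ε * (n * C) - n / (n - 1) * s) ^ 2 / ε := by
      field_simp
      ring
    have h3 : 0 ≤ (ε * (n * C) - n / (n - 1) * s) ^ 2 / ε := by positivity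
    linarith
  have hVle : V ≤ H / (n - 1) := by
    rw [le_div_iff₀ hn1]
    linarith
  have hQM : Q = M ^ 2 + V := by rw [hV]; ring
  have hfin : (1 + 1 / ε) * ((n / ((n : ℝ) - 1) * s) ^ 2) ≤
      (1 + 1 / ε) * (n / ((n : ℝ) - 1) ^ 3) * H := by
    rw [mul_pow, hs2]
    have : (1 + 1 / ε) * ((n / ((n : ℝ) - 1)) ^ 2 * (V / n)) =
        (1 + 1 / ε) * (n / ((n : ℝ) - 1) ^ 2) * V := by field_simp
    rw [this]
    calc _ ≤ (1 + 1 / ε) * (n / ((n : ℝ) - 1) ^ 2) * (H / (n - 1)) := by gcongr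
      _ = _ := by field_simp
  have h7 : H / ((n : ℝ) - 1) = 1 / (n - 1) * H := by ring
  rw [hQM]
  linarith

end GradientSecondMoment

section HighDimension

open ProbabilityTheory

variable {F : E n → ℝ}

lemma contDiff_norm_gradient_sq (hF : ContDiff ℝ 2 F) :
    ContDiff ℝ 1 fun θ ↦ ‖gradient F θ‖ ^ 2 :=
  (contDiff_gradient hF).norm_sq ℝ

lemma norm_sgrad_norm_gradient_sq_le (hF : ContDiff ℝ 2 F) {θ : E n} (hθ : ‖θ‖ = 1)
    (hop : ‖hess F θ‖ ≤ 1) :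
    ‖sgrad (fun θ ↦ ‖gradient F θ‖ ^ 2) θ‖ ^ 2 ≤ 4 * ‖gradient F θ‖ ^ 2 := by
  set g := gradient (fun θ ↦ ‖gradient F θ‖ ^ 2) θ
  have hg (h : E n) : ⟪g, h⟫ = 2 * ⟪gradient F θ, hess F θ h⟫ := by
    rw [inner_gradient, ((hasFDerivAt_gradient hF θ).norm_sq).fderiv]
    simp
  have h1 : ‖g‖ ^ 2 ≤ 2 * ‖gradient F θ‖ * ‖g‖ := by
    rw [← real_inner_self_eq_norm_sq, hg, mul_assoc]
    gcongr
    refine (real_inner_le_norm _ _).trans ?_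
    gcongr
    exact ((hess F θ).le_of_opNorm_le hop g).trans_eq (one_mul _)
  have h2 : ‖g‖ ≤ 2 * ‖gradient F θ‖ := by
    by_contra! h
    nlinarith [norm_nonneg (gradient F θ)]
  rw [norm_sgrad_sq _ hθ]
  nlinarith [sq_nonneg ⟪g, θ⟫, norm_nonneg g]

lemma gradient_neg (F : E n → ℝ) (θ : E n) : gradient (fun x ↦ -F x) θ = -gradient F θ := by
  simp [gradient, fderiv_fun_neg]

lemma integral_exp_mul_le (hn : 3 ≤ n) (hF : ContDiff ℝ 2 F)
    (hop : ∀ θ, ‖θ‖ = 1 → ‖hess F θ‖ ≤ 1) {v s : ℝ} (hv : v = 1 / ((n : ℝ) - 2)) (hs : 0 < s)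
    (hs' : 2 * (v * s) ^ 2 < 1) :
    ∫ θ, Real.exp (s * (F θ - ∫ η, F η ∂sphMeasure n)) ∂sphMeasure n ≤
      Real.exp (s ^ 2 * (v * (∫ θ, ‖gradient F θ‖ ^ 2 ∂sphMeasure n) / (1 - 2 * (v * s) ^ 2))) := by
  have : NeZero n := ⟨by omega⟩
  have h := cgf_le_of_sgrad_gradient_sq_le hn (hF.of_le (by norm_num))
    (contDiff_norm_gradient_sq hF)
    (fun θ hθ ↦ norm_sgrad_norm_gradient_sq_le hF hθ (hop θ hθ)) hv hs hs'
  set μ := ∫ η, F η ∂sphMeasure n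
  have hi : Integrable (fun θ ↦ Real.exp (s * F θ)) (sphMeasure n) :=
    integrable_exp_sphMeasure (hF.continuous.const_smul s)
  have h0 : 0 < ∫ θ, Real.exp (s * F θ) ∂sphMeasure n := integral_exp_pos hi
  have h1 : ∫ θ, Real.exp (s * F θ) ∂sphMeasure n = Real.exp (cgf F (sphMeasure n) s) := by
    rw [cgf, mgf, Real.exp_log h0]
  have h2 (θ : E n) : Real.exp (s * (F θ - μ)) = Real.exp (-(s * μ)) * Real.exp (s * F θ) := by
    rw [← Real.exp_add]; ring_nf
  simp_rw [h2]
  rw [integral_const_mul, h1, ← Real.exp_add]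
  gcongr
  linarith

lemma integral_exp_mul_abs_le (hn : 3 ≤ n) (hF : ContDiff ℝ 2 F)
    (hop : ∀ θ, ‖θ‖ = 1 → ‖hess F θ‖ ≤ 1) {v s : ℝ} (hv : v = 1 / ((n : ℝ) - 2)) (hs : 0 < s)
    (hs' : 2 * (v * s) ^ 2 < 1) :
    ∫ θ, Real.exp (s * |F θ - ∫ η, F η ∂sphMeasure n|) ∂sphMeasure n ≤
      2 * Real.exp (s ^ 2 * (v * (∫ θ, ‖gradient F θ‖ ^ 2 ∂sphMeasure n) /
        (1 - 2 * (v * s) ^ 2))) := by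
  have : NeZero n := ⟨by omega⟩
  have h1 := integral_exp_mul_le hn hF hop hv hs hs'
  have hneg : hess (fun x ↦ -F x) = fun θ ↦ -hess F θ := by
    ext1 θ
    have : gradient (fun x ↦ -F x) = fun x ↦ -gradient F x := funext (gradient_neg F)
    rw [hess, this, fderiv_fun_neg, hess]
  have h2 := integral_exp_mul_le hn hF.neg (by simpa [hneg] using hop) hv hs hs'
  simp only [gradient_neg, norm_neg, integral_neg, sub_neg_eq_add] at h2
  set μ := ∫ η, F η ∂sphMeasure n
  have hc : Continuous fun θ ↦ F θ := hF.continuous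
  have hi1 : Integrable (fun θ ↦ Real.exp (s * (F θ - μ))) (sphMeasure n) :=
    integrable_exp_sphMeasure (by fun_prop)
  have hi2 : Integrable (fun θ ↦ Real.exp (s * (-F θ + μ))) (sphMeasure n) :=
    integrable_exp_sphMeasure (by fun_prop)
  have hi : Integrable (fun θ ↦ Real.exp (s * |F θ - μ|)) (sphMeasure n) :=
    integrable_exp_sphMeasure (by fun_prop)
  have h3 : ∫ θ, Real.exp (s * |F θ - μ|) ∂sphMeasure n ≤
      ∫ θ, (Real.exp (s * (F θ - μ)) + Real.exp (s * (-F θ + μ))) ∂sphMeasure n := by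
    refine integral_mono hi (hi1.add hi2) fun θ ↦ ?_
    rcases abs_cases (F θ - μ) with ⟨h, -⟩ | ⟨h, -⟩ <;> simp only [h]
    · linarith [Real.exp_pos (s * (-F θ + μ))]
    · rw [neg_sub', sub_neg_eq_add]; linarith [Real.exp_pos (s * (F θ - μ))]
  rw [integral_add hi1 hi2] at h3
  linarith

/-- Jensen's inequality for the power `5/4`. -/
lemma integral_exp_le_rpow [NeZero n] {u : E n → ℝ} (hu : Continuous u) :
    (∫ θ, Real.exp (u θ) ∂sphMeasure n) ^ (5 / 4 : ℝ) ≤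
      ∫ θ, Real.exp (5 / 4 * u θ) ∂sphMeasure n := by
  have h := (convexOn_rpow (p := 5 / 4) (by norm_num)).map_integral_le (μ := sphMeasure n)
    (f := fun θ ↦ Real.exp (u θ))
    (Real.continuous_rpow_const (by norm_num)).continuousOn isClosed_Ici
    (.of_forall fun θ ↦ (Real.exp_pos _).le) (integrable_exp_sphMeasure hu)
    (by
      have : (fun x : ℝ ↦ x ^ (5 / 4 : ℝ)) ∘ (fun θ ↦ Real.exp (u θ)) =
          fun θ ↦ Real.exp (u θ * (5 / 4)) := by
        ext θ; simp [← Real.exp_mul]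
      rw [this]
      exact integrable_exp_sphMeasure (by fun_prop))
  simpa [← Real.exp_mul, mul_comm] using h

end HighDimension

lemma one_add_le_sq (b₀ b : ℝ) :
    1 + 2 * b₀ ^ 2 + 8 * b ^ 2 ≤ (1 + b₀ ^ 2 + 4 * b ^ 2) ^ 2 := by
  nlinarith [sq_nonneg (b₀ ^ 2), sq_nonneg (b ^ 2), mul_nonneg (sq_nonneg b₀) (sq_nonneg b)]

lemma two_mul_sq_le {m D : ℝ} (hm : 1 ≤ m) (hD : 1 ≤ D) :
    2 * (1 / m * (5 * (m + 1) / (16 * D))) ^ 2 ≤ 25 / 32 / D ^ 2 := by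
  have hκ : (m + 1) / m ≤ 2 := by rw [div_le_iff₀ (by positivity)]; linarith
  calc 2 * (1 / m * (5 * (m + 1) / (16 * D))) ^ 2 = 2 * ((m + 1) / m * (5 / (16 * D))) ^ 2 := by
        field_simp
    _ ≤ 2 * (2 * (5 / (16 * D))) ^ 2 := by gcongr
    _ = 25 / 32 / D ^ 2 := by field_simp; norm_num

lemma exponent_le {m D Q b₀ b : ℝ} (hm : 1 ≤ m) (hD : D = 1 + b₀ ^ 2 + 4 * b ^ 2) (hQ0 : 0 ≤ Q)
    (hB : (m + 1) * Q ≤ 8 / 7 * b₀ + 7 * b ^ 2) :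
    (5 * (m + 1) / (16 * D)) ^ 2 * (1 / m * Q / (1 - 2 * (1 / m * (5 * (m + 1) / (16 * D))) ^ 2)) ≤
      Real.log 2 / 4 := by
  have hD1 : 1 ≤ D := by rw [hD]; nlinarith [sq_nonneg b₀, sq_nonneg b]
  have hD2 : 1 + 2 * b₀ ^ 2 + 8 * b ^ 2 ≤ D ^ 2 := hD ▸ one_add_le_sq b₀ b
  have hvs := two_mul_sq_le hm hD1
  clear hD
  have hD3 : 0 < D ^ 2 - 25 / 32 := by nlinarith
  have hlt : 0 < 1 - 25 / 32 / D ^ 2 := by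
    rw [sub_pos, div_lt_one (by positivity)]; linarith
  have hκ : (m + 1) / m ≤ 2 := by rw [div_le_iff₀ (by positivity)]; linarith
  calc (5 * (m + 1) / (16 * D)) ^ 2 *
        (1 / m * Q / (1 - 2 * (1 / m * (5 * (m + 1) / (16 * D))) ^ 2))
      ≤ (5 * (m + 1) / (16 * D)) ^ 2 * (1 / m * Q / (1 - 25 / 32 / D ^ 2)) := by gcongr
    _ = 25 / 256 * ((m + 1) / m) * ((m + 1) * Q) / (D ^ 2 - 25 / 32) := by
        rw [show 1 - 25 / 32 / D ^ 2 = (D ^ 2 - 25 / 32) / D ^ 2 by field_simp]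
        have := hD3.ne'
        generalize D ^ 2 - 25 / 32 = y at *
        field_simp
        ring
    _ ≤ 25 / 256 * 2 * (8 / 7 * b₀ + 7 * b ^ 2) / (D ^ 2 - 25 / 32) := by gcongr
    _ ≤ Real.log 2 / 4 := by
        rw [div_le_iff₀ hD3]
        have h1 : 0.6931 / 4 * (D ^ 2 - 25 / 32) ≤ Real.log 2 / 4 * (D ^ 2 - 25 / 32) := by
          gcongr
          linarith [Real.log_two_gt_d9]
        nlinarith [sq_nonneg (b₀ - 0.322), sq_nonneg b]

lemma mul_integral_norm_gradient_sq_le (hn : 3 ≤ n) {F : E n → ℝ} (hF : ContDiff ℝ 2 F)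
    {b₀ b : ℝ} (hb₀ : 0 ≤ b₀)
    (hc : (n : ℝ) ^ 2 * ‖∫ θ, F θ • θ ∂sphMeasure n‖ ^ 2 ≤ b₀ / n)
    (hHS : ∫ θ, hsNormSq (hess F θ) ∂sphMeasure n ≤ b ^ 2) :
    ((n : ℝ) - 1) * ∫ θ, ‖gradient F θ‖ ^ 2 ∂sphMeasure n ≤ 8 / 7 * b₀ + 7 * b ^ 2 := by
  have hn' : (3 : ℝ) ≤ n := by exact_mod_cast hn
  have hQ := integral_norm_gradient_sq_le (by omega) hF (ε := 1 / 7) (by norm_num)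
  obtain ⟨m, hm⟩ : ∃ m : ℝ, m = n - 1 := ⟨_, rfl⟩
  have hm2 : 2 ≤ m := by linarith
  have hnm : (n : ℝ) = m + 1 := by linarith
  rw [hnm] at hc hQ ⊢
  simp only [add_sub_cancel_right] at *
  have e : m * ((1 + 1 / 7) * (b₀ / (m + 1)) +
      ((1 + 1 / (1 / 7)) * ((m + 1) / m ^ 3) + 1 / m) * b ^ 2) =
      8 / 7 * b₀ * (m / (m + 1)) + (8 * ((m + 1) / m ^ 2) + 1) * b ^ 2 := by
    field_simp
    ring
  have h1 : m / (m + 1) ≤ 1 := by rw [div_le_one (by positivity)]; linarith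
  have h2 : (m + 1) / m ^ 2 ≤ 3 / 4 := by
    rw [div_le_iff₀ (by positivity)]; nlinarith
  calc m * ∫ θ, ‖gradient F θ‖ ^ 2 ∂sphMeasure n ≤ m * ((1 + 1 / 7) * (b₀ / (m + 1)) +
      ((1 + 1 / (1 / 7)) * ((m + 1) / m ^ 3) + 1 / m) * b ^ 2) := by
        refine mul_le_mul_of_nonneg_left (hQ.trans ?_) (by positivity)
        gcongr
    _ = _ := e
    _ ≤ 8 / 7 * b₀ * 1 + (8 * (3 / 4) + 1) * b ^ 2 := by gcongr
    _ = _ := by ring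

theorem integral_exp_abs_le_two_of_three_le (hn : 3 ≤ n) {F : E n → ℝ} (hF : ContDiff ℝ 2 F)
    (hop : ∀ θ, ‖θ‖ = 1 → ‖hess F θ‖ ≤ 1) {b₀ b : ℝ} (hb₀ : 0 ≤ b₀)
    (hc : (n : ℝ) ^ 2 * ‖∫ θ, F θ • θ ∂sphMeasure n‖ ^ 2 ≤ b₀ / n)
    (hHS : ∫ θ, hsNormSq (hess F θ) ∂sphMeasure n ≤ b ^ 2) :
    ∫ θ, Real.exp (((n : ℝ) - 1) / (4 * (1 + b₀ ^ 2 + 4 * b ^ 2)) *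
      |F θ - ∫ η, F η ∂sphMeasure n|) ∂sphMeasure n ≤ 2 := by
  have : NeZero n := ⟨by omega⟩
  have hB := mul_integral_norm_gradient_sq_le hn hF hb₀ hc hHS
  have hQ0 : 0 ≤ ∫ θ, ‖gradient F θ‖ ^ 2 ∂sphMeasure n := integral_nonneg fun θ ↦ by positivity
  obtain ⟨D, hD⟩ : ∃ D, D = 1 + b₀ ^ 2 + 4 * b ^ 2 := ⟨_, rfl⟩
  obtain ⟨m, hm⟩ : ∃ m : ℝ, m = n - 2 := ⟨_, rfl⟩
  have hm1 : 1 ≤ m := by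
    have : (3 : ℝ) ≤ n := by exact_mod_cast hn
    linarith
  have hnm : (n : ℝ) - 1 = m + 1 := by linarith
  have hD1 : 1 ≤ D := by rw [hD]; nlinarith [sq_nonneg b₀, sq_nonneg b]
  rw [hnm] at hB ⊢
  rw [← hD]
  have hvs : 2 * (1 / m * (5 * (m + 1) / (16 * D))) ^ 2 < 1 := by
    refine (two_mul_sq_le hm1 hD1).trans_lt ?_
    rw [div_lt_one (by positivity)]
    nlinarith
  have hexp := exponent_le hm1 hD hQ0 hB
  obtain ⟨s, hs⟩ : ∃ s, s = 5 * (m + 1) / (16 * D) := ⟨_, rfl⟩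
  have hs0 : 0 < s := by rw [hs]; positivity
  rw [← hs] at hvs hexp
  have key := (integral_exp_mul_abs_le hn hF hop (hm ▸ rfl) hs0 hvs).trans
    (mul_le_mul_of_nonneg_left (Real.exp_le_exp.2 hexp) zero_le_two)
  have hcont : Continuous fun θ ↦ F θ := hF.continuous
  have jensen := integral_exp_le_rpow (n := n)
    (u := fun θ ↦ (m + 1) / (4 * D) * |F θ - ∫ η, F η ∂sphMeasure n|) (by fun_prop)
  have hconst (x : ℝ) : 5 / 4 * ((m + 1) / (4 * D) * x) = s * x := by
    rw [hs]; field_simp; ring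
  simp_rw [hconst] at jensen
  refine (Real.rpow_le_rpow_iff (integral_nonneg fun θ ↦ (Real.exp_pos _).le) zero_le_two
    (by norm_num : (0 : ℝ) < 5 / 4)).1 (jensen.trans (key.trans_eq ?_))
  rw [Real.rpow_def_of_pos two_pos]
  nth_rw 1 [← Real.exp_log two_pos]
  rw [← Real.exp_add]
  ring_nf

section Circle

open ProbabilityTheory

/-- The point of the unit circle at angle `t`. -/
def circlePoint (t : ℝ) : E 2 := !₂[Real.cos t, Real.sin t]

lemma circlePoint_eq (t : ℝ) :
    circlePoint t = Complex.orthonormalBasisOneI.repr (Real.cos t + Real.sin t * Complex.I) := by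
  ext i
  fin_cases i <;> simp [circlePoint, Complex.cos_ofReal_re, Complex.sin_ofReal_re]

lemma exists_integral_sphMeasure_two : ∃ K : ℝ, ∀ G : E 2 → ℝ, Continuous G →
    ∫ θ, G θ ∂sphMeasure 2 = K * ∫ t in Set.Ioo (-Real.pi) Real.pi, G (circlePoint t) := by
  set d : ℝ → ℝ := fun r ↦ (2 * Real.pi) ^ (-(Module.finrank ℝ (E 2) : ℝ) / 2) *
      Real.exp (-(1 / 2) * r ^ 2) with hd
  have hd0 (r : ℝ) : 0 ≤ d r := by positivity
  have hdc : Continuous d := by fun_prop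
  refine ⟨∫ r in Set.Ioi (0 : ℝ), r * d r, fun G hG ↦ ?_⟩
  have h1 := (HasInt.polar (measurable_const (a := (1 : ℝ))) (hasInt_const (μ := stdGaussian (E 2)) 1)
    (integrable_sphMeasure hG).hasInt).2
  simp only [one_mul] at h1
  rw [← h1, stdGaussian_eq_withDensity, integral_withDensity_eq_integral_toReal_smul
    (by fun_prop) (by simp)]
  rw [← (Complex.orthonormalBasisOneI.measurePreserving_repr).integral_comp
    (Complex.orthonormalBasisOneI.repr.toHomeomorph.measurableEmbedding)]
  rw [← Complex.integral_comp_polarCoord_symm, polarCoord_target, Measure.volume_eq_prod,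
    ← setIntegral_prod_mul]
  refine setIntegral_congr_fun (measurableSet_Ioi.prod measurableSet_Ioo) fun p hp ↦ ?_
  have hp1 : 0 < p.1 := hp.1
  simp only [LinearIsometryEquiv.norm_map, Complex.norm_polarCoord_symm, abs_of_pos hp1]
  rw [ENNReal.toReal_ofReal (hd0 p.1), circlePoint_eq, Complex.polarCoord_symm_apply,
    ← map_smul, ← Complex.real_smul, inv_smul_smul₀ hp1.ne', smul_eq_mul, smul_eq_mul]
  ring

lemma integral_sphMeasure_two {G : E 2 → ℝ} (hG : Continuous G) :
    ∫ θ, G θ ∂sphMeasure 2 =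
      (2 * Real.pi)⁻¹ * ∫ t in (-Real.pi)..Real.pi, G (circlePoint t) := by
  obtain ⟨K, hK⟩ := exists_integral_sphMeasure_two
  have h1 := hK (fun _ ↦ 1) continuous_const
  have hπ := Real.pi_pos
  simp [show Real.pi + Real.pi = 2 * Real.pi by ring, hπ.le] at h1
  rw [hK G hG, intervalIntegral.integral_of_le (by linarith), integral_Ioc_eq_integral_Ioo]
  congr 1
  field_simp
  linarith

lemma hasDerivAt_circlePoint (t : ℝ) :
    HasDerivAt circlePoint !₂[-Real.sin t, Real.cos t] t := by
  refine ((PiLp.continuousLinearEquiv 2 ℝ (fun _ : Fin 2 ↦ ℝ)).symm.hasFDerivAt.comp_hasDerivAt t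
    (f := fun t ↦ ![Real.cos t, Real.sin t]) (f' := ![-Real.sin t, Real.cos t])
    (hasDerivAt_pi.2 fun i ↦ ?_))
  fin_cases i
  · simpa [circlePoint] using Real.hasDerivAt_cos t
  · simpa [circlePoint] using Real.hasDerivAt_sin t

lemma continuous_circlePoint : Continuous circlePoint :=
  continuous_iff_continuousAt.2 fun t ↦ (hasDerivAt_circlePoint t).continuousAt

lemma periodic_circlePoint : Function.Periodic circlePoint (2 * Real.pi) := fun t ↦ by
  simp [circlePoint]

lemma integral_sphMeasure_two_eq {G : E 2 → ℝ} (hG : Continuous G) (t : ℝ) :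
    ∫ x in (t - 2 * Real.pi)..t, G (circlePoint x) =
      2 * Real.pi * ∫ θ, G θ ∂sphMeasure 2 := by
  have h := (periodic_circlePoint.comp G).intervalIntegral_add_eq (t - 2 * Real.pi) (-Real.pi)
  rw [sub_add_cancel, show -Real.pi + 2 * Real.pi = Real.pi by ring] at h
  have hπ := Real.pi_pos
  simp only [Function.comp_apply] at h
  rw [h, integral_sphMeasure_two hG]
  field_simp

lemma abs_sub_integral_le {F : E 2 → ℝ} (hF : ContDiff ℝ 1 F) (t : ℝ) :
    |F (circlePoint t) - ∫ θ, F θ ∂sphMeasure 2| ≤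
      Real.pi ^ 2 / 6 + (∫ θ, ‖gradient F θ‖ ^ 2 ∂sphMeasure 2) / 2 := by
  have hπ := Real.pi_pos
  set τ : ℝ → E 2 := fun x ↦ !₂[-Real.sin x, Real.cos x]
  have hτ (x : ℝ) : ‖τ x‖ = 1 := by simp [τ, EuclideanSpace.norm_eq]
  have hτc : Continuous τ := by fun_prop
  have hgc := continuous_gradient hF
  have hcc := continuous_circlePoint
  have hFc := hF.continuous
  have hder (x : ℝ) : HasDerivAt (fun x ↦ F (circlePoint x))
      ⟪gradient F (circlePoint x), τ x⟫ x := by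
    rw [inner_gradient]
    exact ((hF.differentiable (by norm_num)) _).hasFDerivAt.comp_hasDerivAt x
      (hasDerivAt_circlePoint x)
  have hcont : Continuous fun x ↦ ⟪gradient F (circlePoint x), τ x⟫ :=
    (hgc.comp hcc).inner hτc
  have hparts := intervalIntegral.integral_mul_deriv_eq_deriv_mul (a := t - 2 * Real.pi) (b := t)
    (u := fun x ↦ x - (t - Real.pi)) (u' := fun _ ↦ 1)
    (fun x _ ↦ (hasDerivAt_id x).sub_const _) (fun x _ ↦ hder x)
    (by simp) (hcont.intervalIntegrable _ _)
  simp only [one_mul] at hparts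
  rw [periodic_circlePoint.sub_eq, integral_sphMeasure_two_eq hFc] at hparts
  have hi1 : Continuous fun x ↦ 1 / 2 * (x - (t - Real.pi)) ^ 2 := by fun_prop
  have hi2 : Continuous fun x ↦ 1 / 2 * ‖gradient F (circlePoint x)‖ ^ 2 := by fun_prop
  have hbound : |∫ x in (t - 2 * Real.pi)..t,
      (x - (t - Real.pi)) * ⟪gradient F (circlePoint x), τ x⟫| ≤
      ∫ x in (t - 2 * Real.pi)..t,
        (1 / 2 * (x - (t - Real.pi)) ^ 2 + 1 / 2 * ‖gradient F (circlePoint x)‖ ^ 2) := by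
    rw [← Real.norm_eq_abs]
    refine intervalIntegral.norm_integral_le_of_norm_le (by linarith) (.of_forall fun x _ ↦ ?_)
      ((hi1.add hi2).intervalIntegrable _ _)
    have h := abs_real_inner_le_norm (gradient F (circlePoint x)) (τ x)
    rw [hτ, mul_one] at h
    rw [Real.norm_eq_abs, abs_mul]
    nlinarith [sq_nonneg (|x - (t - Real.pi)| - ‖gradient F (circlePoint x)‖),
      sq_abs (x - (t - Real.pi)), abs_nonneg (x - (t - Real.pi))]
  rw [intervalIntegral.integral_add (hi1.intervalIntegrable _ _) (hi2.intervalIntegrable _ _),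
    intervalIntegral.integral_const_mul,
    intervalIntegral.integral_const_mul,
    integral_sphMeasure_two_eq (G := fun θ ↦ ‖gradient F θ‖ ^ 2) (by fun_prop),
    intervalIntegral.integral_comp_sub_right (fun x ↦ x ^ 2), integral_pow, hparts] at hbound
  set μ := ∫ θ, F θ ∂sphMeasure 2
  set Q := ∫ θ, ‖gradient F θ‖ ^ 2 ∂sphMeasure 2
  have e : (t - (t - Real.pi)) * F (circlePoint t) -
      (t - 2 * Real.pi - (t - Real.pi)) * F (circlePoint t) - 2 * Real.pi * μ =
      2 * Real.pi * (F (circlePoint t) - μ) := by ring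
  rw [e, abs_mul, abs_of_pos (by positivity : (0 : ℝ) < 2 * Real.pi)] at hbound
  refine le_of_mul_le_mul_left (hbound.trans_eq ?_) (by positivity : (0 : ℝ) < 2 * Real.pi)
  push_cast
  ring

theorem integral_exp_abs_le_two_of_two {F : E 2 → ℝ} (hF : ContDiff ℝ 2 F) {b₀ b : ℝ}
    (hc : 4 * ‖∫ θ, F θ • θ ∂sphMeasure 2‖ ^ 2 ≤ b₀ / 2)
    (hHS : ∫ θ, hsNormSq (hess F θ) ∂sphMeasure 2 ≤ b ^ 2) :
    ∫ θ, Real.exp (1 / (4 * (1 + b₀ ^ 2 + 4 * b ^ 2)) * |F θ - ∫ η, F η ∂sphMeasure 2|)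
      ∂sphMeasure 2 ≤ 2 := by
  have hQ := integral_norm_gradient_sq_le le_rfl hF one_pos
  have hF1 : ContDiff ℝ 1 F := hF.of_le (by norm_num)
  have hFc := hF.continuous
  have hsup (t : ℝ) : 1 / (4 * (1 + b₀ ^ 2 + 4 * b ^ 2)) *
      |F (circlePoint t) - ∫ η, F η ∂sphMeasure 2| ≤ Real.log 2 := by
    have h := abs_sub_integral_le hF1 t
    norm_num at hQ
    rw [div_mul_eq_mul_div, one_mul, div_le_iff₀ (by positivity)]
    have h1 : 0.6931 * (4 * (1 + b₀ ^ 2 + 4 * b ^ 2)) ≤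
        Real.log 2 * (4 * (1 + b₀ ^ 2 + 4 * b ^ 2)) := by
      gcongr
      linarith [Real.log_two_gt_d9]
    have h2 : Real.pi ^ 2 ≤ 3.15 ^ 2 := by
      gcongr
      exact Real.pi_lt_d2.le
    nlinarith [sq_nonneg (b₀ - 0.2), sq_nonneg b]
  rw [integral_sphMeasure_two (by fun_prop)]
  have hπ := Real.pi_pos
  have hcc := continuous_circlePoint
  calc _ ≤ (2 * Real.pi)⁻¹ * ∫ _ in (-Real.pi)..Real.pi, (2 : ℝ) := by
        refine mul_le_mul_of_nonneg_left (intervalIntegral.integral_mono (by linarith)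
          (Continuous.intervalIntegrable (by fun_prop) _ _) (by simp) fun t ↦ ?_) (by positivity)
        exact (Real.exp_le_exp.2 (hsup t)).trans_eq (Real.exp_log two_pos)
    _ = 2 := by simp; field_simp; norm_num

end Circle

section Assembly

open scoped Topology ContDiff Manifold

lemma exists_contDiff_eventuallyEq {f : E n → ℝ} {U K : Set (E n)} (hU : IsOpen U)
    (hK : IsClosed K) (hKU : K ⊆ U) (hf : ContDiffOn ℝ 2 f U) :
    ∃ g : E n → ℝ, ContDiff ℝ 2 g ∧ ∀ θ ∈ K, g =ᶠ[𝓝 θ] f := by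
  obtain ⟨χ, h0, h1, -⟩ := exists_contMDiffMap_zero_one_nhds_of_isClosed (n := 2)
    (modelWithCornersSelf ℝ (E n)) hU.isClosed_compl hK
    (Set.disjoint_compl_left_iff_subset.2 hKU)
  have hχ : ContDiff ℝ 2 χ := χ.contMDiff.contDiff
  refine ⟨fun x ↦ χ x * f x, contDiff_iff_contDiffAt.2 fun x ↦ ?_, fun θ hθ ↦ ?_⟩
  · by_cases hx : x ∈ U
    · exact hχ.contDiffAt.mul (hf.contDiffAt (hU.mem_nhds hx))
    · have h : (fun x ↦ χ x * f x) =ᶠ[𝓝 x] fun _ ↦ 0 := by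
        filter_upwards [eventually_nhdsSet_iff_forall.1 h0 x hx] with y hy
        simp [hy]
      exact contDiffAt_const.congr_of_eventuallyEq h
  · filter_upwards [eventually_nhdsSet_iff_forall.1 h1 θ hθ] with y hy
    simp [hy]

lemma hess_congr {f g : E n → ℝ} {θ : E n} (h : g =ᶠ[𝓝 θ] f) : hess g θ = hess f θ := by
  refine Filter.EventuallyEq.fderiv_eq ?_
  filter_upwards [h.eventuallyEq_nhds] with y hy
  rw [gradient, gradient, hy.fderiv_eq]

lemma hess_sub_sq_norm {g : E n → ℝ} (hg : ContDiff ℝ 2 g) (a : ℝ) (θ : E n) :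
    hess (fun x ↦ g x - a / 2 * ‖x‖ ^ 2) θ =
      hess g θ - a • ContinuousLinearMap.id ℝ (E n) := by
  have h : gradient (fun x ↦ g x - a / 2 * ‖x‖ ^ 2) = fun x ↦ gradient g x - a • x := by
    ext1 x
    refine ext_inner_right ℝ fun y ↦ ?_
    have h1 : HasFDerivAt g (fderiv ℝ g x) x := (hg.differentiable (by norm_num) x).hasFDerivAt
    have h2 : HasFDerivAt (fun x : E n ↦ ‖x‖ ^ 2) (2 • (innerSL ℝ x)) x := by
      simpa using (hasStrictFDerivAt_norm_sq x).hasFDerivAt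
    rw [inner_gradient, (h1.fun_sub (h2.const_mul (a / 2))).fderiv, inner_sub_left, inner_gradient,
      real_inner_smul_left]
    simp
    ring
  rw [hess, h]
  exact ((hasFDerivAt_gradient hg θ).fun_sub ((hasFDerivAt_id θ).const_smul a)).fderiv

lemma integral_id_sphMeasure [NeZero n] : ∫ θ, θ ∂sphMeasure n = 0 := by
  refine ext_inner_left ℝ fun v ↦ ?_
  have hi : Integrable (fun θ : E n ↦ θ) (sphMeasure n) := integrable_sphMeasure continuous_id
  rw [← integral_inner hi, integral_inner_sphMeasure, inner_zero_right]

lemma integral_integral_inner_mul [NeZero n] {g : E n → ℝ} (hg : Continuous g) :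
    ∫ x, ∫ y, ⟪x, y⟫ * (g x * g y) ∂sphMeasure n ∂sphMeasure n =
      ‖∫ θ, g θ • θ ∂sphMeasure n‖ ^ 2 := by
  have hi : Integrable (fun θ : E n ↦ g θ • θ) (sphMeasure n) :=
    integrable_sphMeasure (hg.smul continuous_id)
  have h (x y : E n) : ⟪x, y⟫ * (g x * g y) = ⟪g x • x, g y • y⟫ := by
    rw [real_inner_smul_left, real_inner_smul_right]; ring
  simp_rw [h, integral_inner hi, real_inner_comm (∫ θ, g θ • θ ∂sphMeasure n), integral_inner hi,
    real_inner_self_eq_norm_sq]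

lemma integral_exp_abs_le_two_of_contDiff (hn : 2 ≤ n) {g : E n → ℝ} (hg : ContDiff ℝ 2 g)
    (hmean : ∫ θ, g θ ∂sphMeasure n = 0) {b₀ : ℝ} (hb₀ : 0 ≤ b₀)
    (hcorr : ∫ x, ∫ y, ⟪x, y⟫ * (g x * g y) ∂sphMeasure n ∂sphMeasure n ≤ b₀ / (n : ℝ) ^ 3)
    {a b : ℝ}
    (hop : ∀ θ, ‖θ‖ = 1 → ‖hess g θ - a • ContinuousLinearMap.id ℝ (E n)‖ ≤ 1)
    (hHS : ∫ θ, hsNormSq (hess g θ - a • ContinuousLinearMap.id ℝ (E n)) ∂sphMeasure n ≤ b ^ 2) :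
    ∫ θ, Real.exp (((n : ℝ) - 1) / (4 * (1 + b₀ ^ 2 + 4 * b ^ 2)) * |g θ|) ∂sphMeasure n ≤ 2 := by
  have : NeZero n := ⟨by omega⟩
  obtain ⟨F, hFdef⟩ : ∃ F : E n → ℝ, F = fun x ↦ g x - a / 2 * ‖x‖ ^ 2 := ⟨_, rfl⟩
  have hF : ContDiff ℝ 2 F := hFdef ▸ hg.sub (contDiff_const.mul (contDiff_norm_sq ℝ))
  have hhess (θ : E n) : hess F θ = hess g θ - a • ContinuousLinearMap.id ℝ (E n) :=
    hFdef ▸ hess_sub_sq_norm hg a θ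
  have hFg : ∀ᵐ θ ∂sphMeasure n, F θ = g θ - a / 2 := by
    filter_upwards [ae_norm_eq_one] with θ hθ
    simp [hFdef, hθ]
  have hgi : Integrable g (sphMeasure n) := integrable_sphMeasure hg.continuous
  have hFmean : ∫ θ, F θ ∂sphMeasure n = -(a / 2) := by
    rw [integral_congr_ae hFg, integral_sub hgi (integrable_const _), hmean]
    simp
  have hFc : ∫ θ, F θ • θ ∂sphMeasure n = ∫ θ, g θ • θ ∂sphMeasure n := by
    have h : (fun θ ↦ F θ • θ) =ᵐ[sphMeasure n] fun θ ↦ g θ • θ - (a / 2) • θ := by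
      filter_upwards [hFg] with θ hθ
      rw [hθ, sub_smul]
    have h1 : Integrable (fun θ : E n ↦ g θ • θ) (sphMeasure n) :=
      integrable_sphMeasure (hg.continuous.smul continuous_id)
    have h2 : Integrable (fun θ : E n ↦ (a / 2) • θ) (sphMeasure n) :=
      integrable_sphMeasure (continuous_id.const_smul (a / 2))
    rw [integral_congr_ae h, integral_sub h1 h2, integral_smul,
      integral_id_sphMeasure, smul_zero, sub_zero]
  have hc : (n : ℝ) ^ 2 * ‖∫ θ, F θ • θ ∂sphMeasure n‖ ^ 2 ≤ b₀ / n := by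
    rw [integral_integral_inner_mul hg.continuous, ← hFc] at hcorr
    calc _ ≤ (n : ℝ) ^ 2 * (b₀ / (n : ℝ) ^ 3) := by gcongr
      _ = b₀ / n := by field_simp
  have hHS' : ∫ θ, hsNormSq (hess F θ) ∂sphMeasure n ≤ b ^ 2 := by
    simpa only [hhess] using hHS
  have hkey : ∫ θ, Real.exp (((n : ℝ) - 1) / (4 * (1 + b₀ ^ 2 + 4 * b ^ 2)) *
      |F θ - ∫ η, F η ∂sphMeasure n|) ∂sphMeasure n ≤ 2 := by
    obtain rfl | hn3 := hn.eq_or_lt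
    · have h := integral_exp_abs_le_two_of_two hF (b₀ := b₀) (b := b)
        (by norm_num at hc ⊢; exact hc) hHS'
      norm_num at h ⊢
      exact h
    · exact integral_exp_abs_le_two_of_three_le hn3 hF (fun θ hθ ↦ hhess θ ▸ hop θ hθ) hb₀ hc hHS'
  refine (integral_congr_ae ?_).trans_le hkey
  filter_upwards [hFg] with θ hθ
  rw [hFmean, hθ]
  ring_nf

end Assembly

/-- **Theorem 1.3 (Statement 2).** Second order concentration on the sphere without
orthogonality to linear functions, under a correlation-type condition. -/
theorem second_order_concentration_with_linear_part
    {n : ℕ} (hn : 2 ≤ n) (f : E n → ℝ) (U : Set (E n)) (hU : IsOpen U)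
    (hUS : Metric.sphere (0 : E n) 1 ⊆ U) (hf : ContDiffOn ℝ 2 f U)
    (hmean : ∫ θ, f θ ∂sphMeasure n = 0)
    {b₀ : ℝ} (hb₀ : 0 ≤ b₀)
    (hcorr : ∫ x, ∫ y, ⟪x, y⟫ * (f x * f y) ∂sphMeasure n ∂sphMeasure n ≤ b₀ / (n : ℝ) ^ 3)
    {a b : ℝ} (hb : 0 ≤ b)
    (hop : ∀ θ ∈ Metric.sphere (0 : E n) 1,
      ‖hess f θ - a • ContinuousLinearMap.id ℝ (E n)‖ ≤ 1)
    (hHS : ∫ θ, hsNormSq (hess f θ - a • ContinuousLinearMap.id ℝ (E n)) ∂sphMeasure n ≤ b ^ 2) :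
    ∫ θ, Real.exp (((n : ℝ) - 1) / (4 * (1 + b₀ ^ 2 + 4 * b ^ 2)) * |f θ|) ∂sphMeasure n ≤ 2 := by
  have : NeZero n := ⟨by omega⟩
  obtain ⟨g, hg, hgf⟩ := exists_contDiff_eventuallyEq hU isClosed_sphere hUS hf
  have hfg : ∀ᵐ θ ∂sphMeasure n, f θ = g θ := by
    filter_upwards [ae_norm_eq_one] with θ hθ
    exact (hgf θ (mem_sphere_zero_iff_norm.2 hθ)).eq_of_nhds.symm
  have hcorr' : ∫ x, ∫ y, ⟪x, y⟫ * (f x * f y) ∂sphMeasure n ∂sphMeasure n =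
      ∫ x, ∫ y, ⟪x, y⟫ * (g x * g y) ∂sphMeasure n ∂sphMeasure n := by
    refine integral_congr_ae ?_
    filter_upwards [hfg] with x hx
    refine integral_congr_ae ?_
    filter_upwards [hfg] with y hy
    rw [hx, hy]
  have hess' (θ : E n) (hθ : ‖θ‖ = 1) : hess g θ = hess f θ :=
    hess_congr (hgf θ (mem_sphere_zero_iff_norm.2 hθ))
  refine (integral_congr_ae ?_).trans_le (integral_exp_abs_le_two_of_contDiff (a := a) hn hg
    ((integral_congr_ae hfg).symm.trans hmean) hb₀ (hcorr' ▸ hcorr)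
    (fun θ hθ ↦ hess' θ hθ ▸ hop θ (mem_sphere_zero_iff_norm.2 hθ))
    ((integral_congr_ae ?_).trans_le hHS))
  · filter_upwards [hfg] with θ hθ
    rw [hθ]
  · filter_upwards [ae_norm_eq_one] with θ hθ
    rw [hess' θ hθ]

end SecondOrderConc
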